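/- arXiv:math/0406574 — 2 statements merged into one kernel-verified Lean document; each statement's English description precedes it below -/
import Mathlib

section
/- Let n ≥ 3 and let ν = (ν_n,…,ν_1), μ = (μ_n,…,μ_1) ∈ ℤ^n be dominant weights of type D_n with integer coordinates. Assume μ_n ≥ ν_{n−1} and ν_n − μ_n ≥ 0, and set l = ν_n − μ_n, ν' = (ν_{n−1},…,ν_1), μ' = (μ_{n−1},…,μ_1). Then K^{D_n}_{ν,μ}(q) = q^l · Σ_{(r,m) ∈ ℕ², r + 2m = l} Σ_λ d^λ_{ν',r} · K^{D_{n−1}}_{λ,μ'}(q), where the inner sum is over all dominant weights λ of type D_{n−1} with integer coordinates (only finitely many terms are nonzero). -/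
open scoped BigOperators

noncomputable section

/-- The `q`-analogue of Kostant's partition function attached to the finite set `R`
of positive roots: the coefficient of `q^k` is the number of families
`(m_α)_{α ∈ R}` of nonnegative integers with `∑ m_α = k` and `∑ m_α • α = β`. -/
def kostantQ {n : ℕ} (R : Finset (Fin n → ℚ)) (β : Fin n → ℚ) : PowerSeries ℤ :=
  PowerSeries.mk fun k =>
    (Nat.card {m : {α // α ∈ R} → ℕ //
      (∑ α, m α) = k ∧ (∑ α, (m α : ℚ) • (α : Fin n → ℚ)) = β} : ℤ)

/-- Positive roots of type `D_n` : `e_i - e_j` and `e_i + e_j` for `j < i`. -/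
def rootsD (n : ℕ) : Finset (Fin n → ℚ) :=
  ((Finset.univ : Finset (Fin n × Fin n)).filter fun p => p.2 < p.1).image
      (fun p => Pi.single p.1 (1 : ℚ) - Pi.single p.2 1) ∪
  ((Finset.univ : Finset (Fin n × Fin n)).filter fun p => p.2 < p.1).image
      (fun p => Pi.single p.1 (1 : ℚ) + Pi.single p.2 1)

/-- Positive roots of type `B_n`. -/
def rootsB (n : ℕ) : Finset (Fin n → ℚ) :=
  rootsD n ∪ (Finset.univ : Finset (Fin n)).image fun i => Pi.single i (1 : ℚ)

/-- Positive roots of type `C_n`. -/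
def rootsC (n : ℕ) : Finset (Fin n → ℚ) :=
  rootsD n ∪ (Finset.univ : Finset (Fin n)).image fun i => Pi.single i (2 : ℚ)

/-- Positive roots of type `A_{n-1}` : `e_i - e_j` for `j < i`. -/
def rootsA (n : ℕ) : Finset (Fin n → ℚ) :=
  ((Finset.univ : Finset (Fin n × Fin n)).filter fun p => p.2 < p.1).image
      fun p => Pi.single p.1 (1 : ℚ) - Pi.single p.2 1

/-- `ρ` of type `B_n` : `e_i`-coordinate `i - 1/2` (`0`-based index `i ↦ i + 1/2`). -/
def rhoB (n : ℕ) : Fin n → ℚ := fun i => ((i : ℕ) : ℚ) + 1/2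

/-- `ρ` of type `C_n` : `e_i`-coordinate `i`. -/
def rhoC (n : ℕ) : Fin n → ℚ := fun i => ((i : ℕ) : ℚ) + 1

/-- `ρ` of type `D_n` : `e_i`-coordinate `i - 1`. -/
def rhoD (n : ℕ) : Fin n → ℚ := fun i => ((i : ℕ) : ℚ)

/-- `ρ` of type `A_{n-1}` : `e_i`-coordinate `i - 1`. -/
def rhoA (n : ℕ) : Fin n → ℚ := fun i => ((i : ℕ) : ℚ)

/-- The signed permutation `(σ, ε)` acting on a weight: it maps `e_j` to `± e_{σ j}`. -/
def wAct {n : ℕ} (σ : Equiv.Perm (Fin n)) (ε : Fin n → Bool) (β : Fin n → ℚ) :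
    Fin n → ℚ := fun i => (if ε i then -1 else 1) * β (σ⁻¹ i)

/-- The determinant (sign) of the signed permutation `(σ, ε)`. -/
def wDet {n : ℕ} (σ : Equiv.Perm (Fin n)) (ε : Fin n → Bool) : ℤ :=
  (Equiv.Perm.sign σ : ℤ) * ∏ i, (if ε i then (-1 : ℤ) else 1)

/-- Kostka-Foulkes polynomial of type `B_n`, as a power series in `q`. -/
def KB (n : ℕ) (lam mu : Fin n → ℚ) : PowerSeries ℤ :=
  ∑ σ : Equiv.Perm (Fin n), ∑ ε : Fin n → Bool,
    wDet σ ε • kostantQ (rootsB n) (wAct σ ε (lam + rhoB n) - (mu + rhoB n))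

/-- Kostka-Foulkes polynomial of type `C_n`, as a power series in `q`. -/
def KC (n : ℕ) (lam mu : Fin n → ℚ) : PowerSeries ℤ :=
  ∑ σ : Equiv.Perm (Fin n), ∑ ε : Fin n → Bool,
    wDet σ ε • kostantQ (rootsC n) (wAct σ ε (lam + rhoC n) - (mu + rhoC n))

/-- Kostka-Foulkes polynomial of type `D_n`, as a power series in `q` (the Weyl group
consists of the signed permutations with an even number of sign changes). -/
def KD (n : ℕ) (lam mu : Fin n → ℚ) : PowerSeries ℤ :=
  ∑ σ : Equiv.Perm (Fin n), ∑ ε : Fin n → Bool,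
    if (∏ i, (if ε i then (-1 : ℤ) else 1)) = 1 then
      wDet σ ε • kostantQ (rootsD n) (wAct σ ε (lam + rhoD n) - (mu + rhoD n))
    else 0

/-- Kostka-Foulkes polynomial of type `A_{n-1}`, as a power series in `q`. -/
def KA (n : ℕ) (lam mu : Fin n → ℚ) : PowerSeries ℤ :=
  ∑ σ : Equiv.Perm (Fin n),
    (Equiv.Perm.sign σ : ℤ) •
      kostantQ (rootsA n) ((fun i => (lam + rhoA n) (σ⁻¹ i)) - (mu + rhoA n))

/-- Dominant weight of type `B_n` : `λ_n ≥ ⋯ ≥ λ_1 ≥ 0`, all coordinates in `ℤ`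
or all in `ℤ + 1/2`. -/
def DominantB {n : ℕ} (lam : Fin n → ℚ) : Prop :=
  Monotone lam ∧ (∀ i, 0 ≤ lam i) ∧
    ((∀ i, ∃ z : ℤ, lam i = z) ∨ (∀ i, ∃ z : ℤ, lam i = z + 1/2))

/-- Dominant weight of type `C_n` : `λ_n ≥ ⋯ ≥ λ_1 ≥ 0`, integer coordinates. -/
def DominantC {n : ℕ} (lam : Fin n → ℚ) : Prop :=
  Monotone lam ∧ (∀ i, 0 ≤ lam i) ∧ ∀ i, ∃ z : ℤ, lam i = z

/-- Dominant weight of type `D_n` : `λ_n ≥ ⋯ ≥ λ_2 ≥ |λ_1|`, all coordinates in `ℤ`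
or all in `ℤ + 1/2`. -/
def DominantD {n : ℕ} (lam : Fin n → ℚ) : Prop :=
  (∀ i j : Fin n, i ≤ j → 0 < (i : ℕ) → lam i ≤ lam j) ∧
  (∀ h : 0 < n, ∀ j : Fin n, 0 < (j : ℕ) → |lam ⟨0, h⟩| ≤ lam j) ∧
  ((∀ i, ∃ z : ℤ, lam i = z) ∨ (∀ i, ∃ z : ℤ, lam i = z + 1/2))

/-- Restriction of a weight of rank `n` to the first `n - 1` coordinates
(i.e. forgetting the `e_n`-coordinate). -/
def restrict1 {n : ℕ} (lam : Fin n → ℚ) : Fin (n - 1) → ℚ :=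
  fun i => lam ⟨(i : ℕ), by have := i.2; omega⟩

/-- Pieri number `b^λ_{γ,r}` of type `B_n`. -/
def bPieri {m : ℕ} (γ lam : Fin m → ℚ) (r : ℕ) : ℕ :=
  Nat.card {t : (Fin m → ℕ) × (Fin m → ℕ) × Bool //
    ((cond t.2.2 1 0) + ∑ i, (t.1 i + t.2.1 i)) = r ∧
    (∀ i, ((t.2.1 i : ℚ) - (t.1 i : ℚ)) = lam i - γ i) ∧
    (∀ i : Fin m, ∀ h : (i : ℕ) + 1 < m,
      lam i ≤ lam ⟨(i : ℕ) + 1, h⟩ - (t.2.1 ⟨(i : ℕ) + 1, h⟩ : ℚ)) ∧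
    (∀ i : Fin m, ∀ h : (i : ℕ) + 1 < m,
      lam i + (t.1 i : ℚ) - (t.2.1 i : ℚ) ≤
        lam ⟨(i : ℕ) + 1, h⟩ - (t.2.1 ⟨(i : ℕ) + 1, h⟩ : ℚ)) ∧
    (∀ h : 0 < m,
      if t.2.2 then (0 : ℚ) < lam ⟨0, h⟩ - (t.2.1 ⟨0, h⟩ : ℚ)
      else (0 : ℚ) ≤ lam ⟨0, h⟩ - (t.2.1 ⟨0, h⟩ : ℚ))}

/-- Pieri number `c^λ_{γ,r}` of type `C_n`. -/
def cPieri {m : ℕ} (γ lam : Fin m → ℚ) (r : ℕ) : ℕ :=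
  Nat.card {t : (Fin m → ℕ) × (Fin m → ℕ) //
    (∑ i, (t.1 i + t.2 i)) = r ∧
    (∀ i, ((t.2 i : ℚ) - (t.1 i : ℚ)) = lam i - γ i) ∧
    (∀ i : Fin m, ∀ h : (i : ℕ) + 1 < m,
      lam i ≤ lam ⟨(i : ℕ) + 1, h⟩ - (t.2 ⟨(i : ℕ) + 1, h⟩ : ℚ)) ∧
    (∀ i : Fin m, ∀ h : (i : ℕ) + 1 < m,
      lam i + (t.1 i : ℚ) - (t.2 i : ℚ) ≤
        lam ⟨(i : ℕ) + 1, h⟩ - (t.2 ⟨(i : ℕ) + 1, h⟩ : ℚ)) ∧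
    (∀ h : 0 < m, (0 : ℚ) ≤ lam ⟨0, h⟩ - (t.2 ⟨0, h⟩ : ℚ))}

/-- Pieri number `d^λ_{γ,r}` of type `D_n`. -/
def dPieri {m : ℕ} (γ lam : Fin m → ℚ) (r : ℕ) : ℕ :=
  Nat.card {t : (Fin m → ℕ) × (Fin m → ℕ) //
    (∀ h : 0 < m, min (t.1 ⟨0, h⟩) (t.2 ⟨0, h⟩) = 0) ∧
    (∑ i, (t.1 i + t.2 i)) = r ∧
    (∀ i, ((t.2 i : ℚ) - (t.1 i : ℚ)) = lam i - γ i) ∧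
    (∀ h : 1 < m,
      (t.1 ⟨0, by omega⟩ = 0 →
        lam ⟨0, by omega⟩ ≤ lam ⟨1, h⟩ - (t.2 ⟨1, h⟩ : ℚ)) ∧
      (0 < t.1 ⟨0, by omega⟩ →
        -lam ⟨0, by omega⟩ ≤ lam ⟨1, h⟩ - (t.2 ⟨1, h⟩ : ℚ))) ∧
    (∀ i : Fin m, 1 ≤ (i : ℕ) → ∀ h : (i : ℕ) + 1 < m,
      lam i ≤ lam ⟨(i : ℕ) + 1, h⟩ - (t.2 ⟨(i : ℕ) + 1, h⟩ : ℚ)) ∧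
    (∀ i : Fin m, 1 ≤ (i : ℕ) → ∀ h : (i : ℕ) + 1 < m,
      lam i + (t.1 i : ℚ) - (t.2 i : ℚ) ≤
        lam ⟨(i : ℕ) + 1, h⟩ - (t.2 ⟨(i : ℕ) + 1, h⟩ : ℚ)) ∧
    (∀ h : 1 < m,
      (t.1 ⟨0, by omega⟩ = 0 → 0 ≤ γ ⟨0, by omega⟩ →
        lam ⟨0, by omega⟩ - (t.2 ⟨0, by omega⟩ : ℚ) ≤ lam ⟨1, h⟩ - (t.2 ⟨1, h⟩ : ℚ)) ∧
      (t.2 ⟨0, by omega⟩ = 0 → 0 ≤ γ ⟨0, by omega⟩ →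
        lam ⟨0, by omega⟩ + (t.1 ⟨0, by omega⟩ : ℚ) ≤ lam ⟨1, h⟩ - (t.2 ⟨1, h⟩ : ℚ)) ∧
      (t.2 ⟨0, by omega⟩ = 0 → γ ⟨0, by omega⟩ < 0 →
        -lam ⟨0, by omega⟩ - (t.1 ⟨0, by omega⟩ : ℚ) ≤ lam ⟨1, h⟩ - (t.2 ⟨1, h⟩ : ℚ)) ∧
      (t.1 ⟨0, by omega⟩ = 0 → γ ⟨0, by omega⟩ < 0 →
        -lam ⟨0, by omega⟩ + (t.2 ⟨0, by omega⟩ : ℚ) ≤ lam ⟨1, h⟩ - (t.2 ⟨1, h⟩ : ℚ)))}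

/-- The monomial `x^β = ∏ y_i ^ (2 β_i)` in the Laurent polynomial ring
`ℤ[y_1^{±1}, …, y_n^{±1}]`, realized as the group algebra of `ℤ^n`. -/
def xpow {n : ℕ} (β : Fin n → ℚ) : AddMonoidAlgebra ℤ (Fin n → ℤ) :=
  AddMonoidAlgebra.single (fun i => ⌊2 * β i⌋) 1

/-- The Weyl alternant `a_β = ∑_{σ ∈ W_{B_n}} det σ · x^{σ β}` of type `B_n`. -/
def altB {n : ℕ} (β : Fin n → ℚ) : AddMonoidAlgebra ℤ (Fin n → ℤ) :=
  ∑ σ : Equiv.Perm (Fin n), ∑ ε : Fin n → Bool, wDet σ ε • xpow (wAct σ ε β)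

/-- The Weyl alternant `a_β = ∑_{σ ∈ W_{D_n}} det σ · x^{σ β}` of type `D_n`. -/
def altD {n : ℕ} (β : Fin n → ℚ) : AddMonoidAlgebra ℤ (Fin n → ℤ) :=
  ∑ σ : Equiv.Perm (Fin n), ∑ ε : Fin n → Bool,
    if (∏ i, (if ε i then (-1 : ℤ) else 1)) = 1 then wDet σ ε • xpow (wAct σ ε β) else 0

end

/-!
Since `|ν_i + ρ_i| < μ_n + ρ_n` for `i < n`, only the Weyl group elements fixing `e_n` contribute to
`K_{ν,μ}`. Expanding the partition function over the roots `e_n ± e_j`, of which exactly `l` occur,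
gives `q^l` times the sum, over the monomials of the symmetric power `S^l(V)` of the vector
representation of type `D_{n-1}`, of the alternating sums at `ν' + ρ` shifted by the weight of the
monomial.

Those terms are antisymmetric in their weight, as in the Brauer–Klimyk formula. Writing a monomial
`(k, k̄)` as a path from `ν' + ρ` down by `k` and then up by `k̄`, two sign-reversing involutions
cancel everything except the monomials satisfying the inequalities of the Pieri rule. Dividing these
by `(x_1 x̄_1)^m`, with `m = min(k_1, k̄_1)`, sorts them according to `r + 2m = l`.
-/

noncomputable section

open Finset

section VectorMonomials

variable {m : ℕ}

/-- The monomials of degree `l` in the weight vectors `x_i`, `x̄_i` (of weights `-e_i`, `e_i`) of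
the vector representation of type `D_m`: `t.1 i` and `t.2 i` are the exponents of `x_i` and `x̄_i`,
the numbers `k_i` and `k̄_i` of the Pieri rule. -/
def vectorMonomials (m l : ℕ) : Finset ((Fin m → ℕ) × (Fin m → ℕ)) :=
  (piAntidiag univ l).map (Equiv.sumArrowEquivProdArrow (Fin m) (Fin m) ℕ).toEmbedding

lemma mem_vectorMonomials {l : ℕ} {t : (Fin m → ℕ) × (Fin m → ℕ)} :
    t ∈ vectorMonomials m l ↔ ∑ i, (t.1 i + t.2 i) = l := by
  simp [vectorMonomials, mem_map_equiv, Equiv.sumArrowEquivProdArrow, sum_add_distrib]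

/-- The weight `k̄ - k` of the monomial `t = (k, k̄)`. -/
def weight (t : (Fin m → ℕ) × (Fin m → ℕ)) : Fin m → ℤ := fun i => t.2 i - t.1 i

end VectorMonomials

section KostantRecursion

variable {m : ℕ}

lemma coeff_kostantQ_of_equiv {ι : Type*} [Fintype ι] [DecidableEq ι] {R : Finset (Fin m → ℚ)}
    (e : ι ≃ {α // α ∈ R}) (β : Fin m → ℚ) (k : ℕ) :
    PowerSeries.coeff k (kostantQ R β) =
      #{f ∈ piAntidiag (univ : Finset ι) k | ∑ x, f x • (e x : Fin m → ℚ) = β} := by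
  rw [kostantQ, PowerSeries.coeff_mk, Nat.cast_inj,
    ← Nat.subtype_card _ (p := fun f : ι → ℕ => ∑ x, f x = k ∧ ∑ x, f x • (e x : Fin m → ℚ) = β)
      (by simp)]
  refine Nat.card_congr ((e.arrowCongr (.refl ℕ)).subtypeEquiv fun f => ?_).symm
  change _ ↔ ∑ α, f (e.symm α) = k ∧ ∑ α, (f (e.symm α) : ℚ) • (α : Fin m → ℚ) = β
  rw [← e.sum_comp, ← e.sum_comp]
  simp only [e.symm_apply_apply, Nat.cast_smul_eq_nsmul]

lemma mem_rootsD {α : Fin m → ℚ} :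
    α ∈ rootsD m ↔ ∃ i j, j < i ∧
      (Pi.single i 1 + Pi.single j (-1) = α ∨ Pi.single i 1 + Pi.single j 1 = α) := by
  simp [rootsD, sub_eq_add_neg, Pi.single_neg, and_or_left, exists_or]

/-- The positive roots of type `D_{m+1}`: those of type `D_m`, then `e_{m+1} + e_j`, then
`e_{m+1} - e_j`. -/
def rootSucc (m : ℕ) : {α // α ∈ rootsD m} ⊕ (Fin m ⊕ Fin m) → Fin (m + 1) → ℚ :=
  Sum.elim (fun α => Fin.snoc α.1 0)
    (Sum.elim (fun j => Fin.snoc (Pi.single j 1) 1) fun j => Fin.snoc (Pi.single j (-1)) 1)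

lemma rootSucc_injective : Function.Injective (rootSucc m) := by
  have hsnoc (c : ℚ) : Function.Injective fun α : Fin m → ℚ => (Fin.snoc α c : Fin (m + 1) → ℚ) :=
    fun α α' h => (Fin.snoc_injective2 h).1
  have hsingle {c : ℚ} (hc : c ≠ 0) : Function.Injective fun j : Fin m => Pi.single j c :=
    fun i j h => by
      by_contra hij
      exact hc (by simpa [hij] using congrFun h i)
  refine ((hsnoc 0).comp Subtype.val_injective).sumElim
    (((hsnoc 1).comp (hsingle one_ne_zero)).sumElim ((hsnoc 1).comp (hsingle (by simp)))
      fun i j h => ?_) fun α x h => ?_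
  · have hij := congrFun (hsnoc 1 h) i
    rcases eq_or_ne i j with rfl | hne
    · norm_num at hij
    · simp [hne] at hij
  · rcases x with j | j <;> simpa using congrFun h (Fin.last m)

lemma range_rootSucc : Set.range (rootSucc m) = rootsD (m + 1) := by
  have hadd (α α' : Fin m → ℚ) (c c' : ℚ) :
      (Fin.snoc α c + Fin.snoc α' c' : Fin (m + 1) → ℚ) = Fin.snoc (α + α') (c + c') := by
    ext i; cases i using Fin.lastCases <;> simp
  have hcast (i : Fin m) (c : ℚ) :
      (Pi.single i.castSucc c : Fin (m + 1) → ℚ) = Fin.snoc (Pi.single i c) 0 := by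
    ext j; cases j using Fin.lastCases <;> simp [Pi.single_apply]
  have hlast : (Pi.single (Fin.last m) 1 : Fin (m + 1) → ℚ) = Fin.snoc 0 1 := by
    ext j; cases j using Fin.lastCases <;> simp
  ext α
  rw [mem_coe, mem_rootsD, Set.mem_range]
  constructor
  · rintro ⟨⟨α, hα⟩ | j | j, rfl⟩
    · obtain ⟨i, j, hij, rfl | rfl⟩ := mem_rootsD.1 hα <;>
        exact ⟨i.castSucc, j.castSucc, hij, by simp [rootSucc, hcast, hadd]⟩
    · exact ⟨Fin.last m, j.castSucc, j.castSucc_lt_last, by simp [rootSucc, hcast, hlast, hadd]⟩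
    · exact ⟨Fin.last m, j.castSucc, j.castSucc_lt_last, by simp [rootSucc, hcast, hlast, hadd]⟩
  · rintro ⟨i, j, hij, h⟩
    obtain ⟨j, rfl⟩ := Fin.exists_castSucc_eq.2 (hij.trans_le i.le_last).ne
    cases i using Fin.lastCases with
    | last =>
      rcases h with rfl | rfl
      · exact ⟨.inr (.inr j), by simp [rootSucc, hcast, hlast, hadd]⟩
      · exact ⟨.inr (.inl j), by simp [rootSucc, hcast, hlast, hadd]⟩
    | cast i =>
      rcases h with rfl | rfl
      · exact ⟨.inl ⟨_, mem_rootsD.2 ⟨i, j, hij, .inl rfl⟩⟩, by simp [rootSucc, hcast, hadd]⟩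
      · exact ⟨.inl ⟨_, mem_rootsD.2 ⟨i, j, hij, .inr rfl⟩⟩, by simp [rootSucc, hcast, hadd]⟩

/-- The bijection `rootSucc` onto `rootsD (m + 1)`. -/
def rootSuccEquiv (m : ℕ) : {α // α ∈ rootsD m} ⊕ (Fin m ⊕ Fin m) ≃ {α // α ∈ rootsD (m + 1)} :=
  (Equiv.ofInjective _ rootSucc_injective).trans (.setCongr range_rootSucc)

lemma coe_rootSuccEquiv (x) : (rootSuccEquiv m x : Fin (m + 1) → ℚ) = rootSucc m x := rfl

lemma sum_smul_rootSuccEquiv (f : {α // α ∈ rootsD m} ⊕ (Fin m ⊕ Fin m) → ℕ) :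
    ∑ x, f x • (rootSuccEquiv m x : Fin (m + 1) → ℚ) =
      Fin.snoc (∑ α, f (.inl α) • (α : Fin m → ℚ) -
        fun i => (weight (fun j => f (.inr (.inl j)), fun j => f (.inr (.inr j))) i : ℚ))
        ((∑ i, (f (.inr (.inl i)) + f (.inr (.inr i))) : ℕ) : ℚ) := by
  ext i
  simp only [Fintype.sum_sum_type, coe_rootSuccEquiv, rootSucc, Sum.elim_inl, Sum.elim_inr]
  cases i using Fin.lastCases with
  | last => simp [Finset.sum_apply, sum_add_distrib]
  | cast i => simp [Finset.sum_apply, weight, Pi.single_apply]; ring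

lemma kostantQ_rootsD_of_last_neg {β : Fin (m + 1) → ℚ} (hβ : β (Fin.last m) < 0) :
    kostantQ (rootsD (m + 1)) β = 0 := by
  ext k
  rw [coeff_kostantQ_of_equiv (rootSuccEquiv m), filter_false_of_mem, card_empty]
  · simp
  rintro f - rfl
  rw [sum_smul_rootSuccEquiv, Fin.snoc_last] at hβ
  exact hβ.not_ge (Nat.cast_nonneg _)

lemma kostantQ_rootsD_succ (β : Fin m → ℚ) (l : ℕ) :
    kostantQ (rootsD (m + 1)) (Fin.snoc β l) =
      PowerSeries.X ^ l *
        ∑ t ∈ vectorMonomials m l, kostantQ (rootsD m) (β + fun i => (weight t i : ℚ)) := by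
  ext k
  rw [coeff_kostantQ_of_equiv (rootSuccEquiv m), PowerSeries.coeff_X_pow_mul', map_sum]
  simp only [coeff_kostantQ_of_equiv (.refl _), ← Nat.cast_sum, ← card_sigma]
  split_ifs with hk
  · rw [Nat.cast_inj]
    refine card_equiv ((Equiv.sumArrowEquivProdArrow _ _ ℕ).trans <|
      ((Equiv.refl _).prodCongr (Equiv.sumArrowEquivProdArrow _ _ ℕ)).trans <|
      (Equiv.prodComm _ _).trans (Equiv.sigmaEquivProd _ _).symm) fun f => ?_
    rw [mem_filter, sum_smul_rootSuccEquiv, Fin.snoc_injective2.eq_iff, sub_eq_iff_eq_add,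
      Nat.cast_inj]
    simp only [mem_piAntidiag, Fintype.sum_sum_type, ← sum_add_distrib, mem_sigma, mem_filter,
      mem_vectorMonomials, mem_univ, implies_true, and_true]
    have split_degree {a b : ℕ} {p : Prop} :
        a + b = k ∧ p ∧ b = l ↔ b = l ∧ a = k - l ∧ p := by lia
    exact split_degree
  · rw [filter_false_of_mem, card_empty, Nat.cast_zero]
    intro f hf h
    rw [sum_smul_rootSuccEquiv, Fin.snoc_injective2.eq_iff, Nat.cast_inj, sum_add_distrib] at h
    rw [mem_piAntidiag, Fintype.sum_sum_type, Fintype.sum_sum_type] at hf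
    lia

end KostantRecursion

section WeylAlternation

variable {m : ℕ} {M : Type*} [AddCommGroup M]

/-- The sign `∏ i, ±1` of a choice of sign changes `ε`; the signed permutation `(σ, ε)` lies in the
Weyl group of type `D_m` iff it is `1`. -/
def signProd (ε : Fin m → Bool) : ℤ := ∏ i, if ε i then -1 else 1

/-- The alternating sum `∑ det w • G (w β)` over the Weyl group of type `D_m`. -/
def altSum (G : (Fin m → ℚ) → M) (β : Fin m → ℚ) : M :=
  ∑ σ : Equiv.Perm (Fin m), ∑ ε : Fin m → Bool,
    if signProd ε = 1 then wDet σ ε • G (wAct σ ε β) else 0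

lemma KD_eq_altSum (lam mu : Fin m → ℚ) :
    KD m lam mu = altSum (fun x => kostantQ (rootsD m) (x - (mu + rhoD m))) (lam + rhoD m) :=
  rfl

lemma wAct_add (σ : Equiv.Perm (Fin m)) (ε : Fin m → Bool) (β γ : Fin m → ℚ) :
    wAct σ ε (β + γ) = wAct σ ε β + wAct σ ε γ :=
  funext fun _ => mul_add ..

lemma wAct_wAct (σ τ : Equiv.Perm (Fin m)) (ε δ : Fin m → Bool) (β : Fin m → ℚ) :
    wAct σ ε (wAct τ δ β) = wAct (σ * τ) (fun i => xor (ε i) (δ (σ⁻¹ i))) β := by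
  ext i
  cases hε : ε i <;> cases hδ : δ (σ⁻¹ i) <;> simp_all [wAct]

lemma signProd_xor_comp (σ : Equiv.Perm (Fin m)) (ε δ : Fin m → Bool) :
    signProd (fun i => xor (ε i) (δ (σ i))) = signProd ε * signProd δ := by
  rw [signProd, signProd, signProd, ← Equiv.prod_comp σ fun i => if δ i then (-1 : ℤ) else 1,
    ← prod_mul_distrib]
  refine prod_congr rfl fun i _ => ?_
  cases ε i <;> cases δ (σ i) <;> rfl

lemma wDet_mul (σ τ : Equiv.Perm (Fin m)) (ε δ : Fin m → Bool) :
    wDet (σ * τ) (fun i => xor (ε i) (δ (σ⁻¹ i))) = wDet τ δ * wDet σ ε := by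
  change _ * signProd _ = (_ * signProd δ) * (_ * signProd ε)
  rw [signProd_xor_comp, Equiv.Perm.sign_mul, Units.val_mul]
  ring

lemma wDet_smul_altSum_wAct (G : (Fin m → ℚ) → M) (β : Fin m → ℚ) (τ : Equiv.Perm (Fin m))
    {δ : Fin m → Bool} (hδ : signProd δ = 1) :
    wDet τ δ • altSum G (wAct τ δ β) = altSum G β := by
  simp only [altSum, smul_sum, smul_ite, smul_zero, smul_smul]
  refine .trans (sum_congr rfl fun σ _ => ?_) (Equiv.sum_comp (Equiv.mulRight τ) _)
  have hinv : Function.Involutive fun (ε : Fin m → Bool) i => xor (ε i) (δ (σ⁻¹ i)) :=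
    fun ε => by simp
  refine .trans (sum_congr rfl fun ε _ => ?_) (Equiv.sum_comp hinv.toPerm _)
  simp only [Function.Involutive.coe_toPerm, Equiv.coe_mulRight, signProd_xor_comp, hδ, mul_one,
    wDet_mul, wAct_wAct]

lemma altSum_wAct_swap (G : (Fin m → ℚ) → M) (β : Fin m → ℚ) {i j : Fin m} (hij : i ≠ j)
    {δ : Fin m → Bool} (hδ : signProd δ = 1) :
    altSum G (wAct (Equiv.swap i j) δ β) = -altSum G β := by
  have hdet : wDet (Equiv.swap i j) δ = -1 := by
    change _ * signProd δ = -1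
    rw [hδ, Equiv.Perm.sign_swap hij]
    rfl
  rw [← wDet_smul_altSum_wAct G β (Equiv.swap i j) hδ, hdet, neg_smul, one_smul, neg_neg]

lemma sum_vectorMonomials_wAct (H : (Fin m → ℚ) → M) (l : ℕ) (σ : Equiv.Perm (Fin m))
    (ε : Fin m → Bool) :
    ∑ t ∈ vectorMonomials m l, H (wAct σ ε fun i => weight t i) =
      ∑ t ∈ vectorMonomials m l, H fun i => weight t i := by
  refine sum_nbij'
    (fun t => (fun i => cond (ε i) t.2 t.1 (σ⁻¹ i), fun i => cond (ε i) t.1 t.2 (σ⁻¹ i)))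
    (fun t => (fun i => cond (ε (σ i)) t.2 t.1 (σ i), fun i => cond (ε (σ i)) t.1 t.2 (σ i)))
    (fun t ht => ?_) (fun t ht => ?_) (fun t _ => ?_) (fun t _ => ?_) fun t _ => ?_
  · rw [mem_vectorMonomials] at ht ⊢
    rw [← ht, ← Equiv.sum_comp σ⁻¹ fun i => t.1 i + t.2 i]
    exact sum_congr rfl fun i _ => by cases h : ε i <;> simp [h, add_comm]
  · rw [mem_vectorMonomials] at ht ⊢
    rw [← ht, ← Equiv.sum_comp σ fun i => t.1 i + t.2 i]
    exact sum_congr rfl fun i _ => by cases h : ε (σ i) <;> simp [h, add_comm]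
  · ext i <;> cases h : ε (σ i) <;> simp [h]
  · ext i <;> cases h : ε i <;> simp [h]
  · congr 1
    ext i
    cases h : ε i <;> simp [wAct, weight, h]

lemma map_altSum {N : Type*} [AddCommGroup N] (φ : M →+ N) (G : (Fin m → ℚ) → M)
    (β : Fin m → ℚ) : φ (altSum G β) = altSum (fun x => φ (G x)) β := by
  simp only [altSum, map_sum, apply_ite φ, map_zsmul, map_zero]

lemma altSum_sum_add_weight (H : (Fin m → ℚ) → M) (β : Fin m → ℚ) (l : ℕ) :
    altSum (fun x => ∑ t ∈ vectorMonomials m l, H (x + fun i => (weight t i : ℚ))) β =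
      ∑ t ∈ vectorMonomials m l, altSum H (β + fun i => (weight t i : ℚ)) := by
  simp only [altSum]
  rw [sum_comm (s := vectorMonomials m l)]
  refine sum_congr rfl fun σ _ => ?_
  rw [sum_comm (s := vectorMonomials m l)]
  refine sum_congr rfl fun ε _ => ?_
  split_ifs
  · simp only [wAct_add, ← smul_sum]
    rw [sum_vectorMonomials_wAct (fun x => H (wAct σ ε β + x))]
  · rw [sum_const_zero]

end WeylAlternation

section StabilizerOfLast

variable {m : ℕ} {M : Type*} [AddCommGroup M]

/-- The permutation of `Fin (m + 1)` which fixes the last element and is `σ` on the others. -/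
def snocPerm (σ : Equiv.Perm (Fin m)) : Equiv.Perm (Fin (m + 1)) :=
  finSuccEquivLast.symm.permCongr (Equiv.optionCongr σ)

lemma snocPerm_castSucc (σ : Equiv.Perm (Fin m)) (i : Fin m) :
    snocPerm σ i.castSucc = (σ i).castSucc := by simp [snocPerm]

lemma snocPerm_last (σ : Equiv.Perm (Fin m)) : snocPerm σ (Fin.last m) = Fin.last m := by
  simp [snocPerm]

lemma sign_snocPerm (σ : Equiv.Perm (Fin m)) :
    Equiv.Perm.sign (snocPerm σ) = Equiv.Perm.sign σ := by
  rw [snocPerm, Equiv.Perm.sign_permCongr, Equiv.optionCongr_sign]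

lemma snocPerm_injective : Function.Injective (snocPerm (m := m)) :=
  finSuccEquivLast.symm.permCongr.injective.comp Equiv.optionCongr_injective

lemma exists_snocPerm_eq {σ : Equiv.Perm (Fin (m + 1))} (hσ : σ (Fin.last m) = Fin.last m) :
    ∃ τ, snocPerm τ = σ := by
  refine ⟨Equiv.removeNone (finSuccEquivLast.permCongr σ), ?_⟩
  rw [snocPerm, map_equiv_removeNone]
  ext i
  simp [hσ]

lemma snocPerm_inv (σ : Equiv.Perm (Fin m)) : (snocPerm σ)⁻¹ = snocPerm σ⁻¹ :=
  rfl

lemma wAct_snocPerm_snoc (σ : Equiv.Perm (Fin m)) (ε : Fin m → Bool) (β : Fin (m + 1) → ℚ) :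
    wAct (snocPerm σ) (Fin.snoc ε false) β = Fin.snoc (wAct σ ε (Fin.init β)) (β (Fin.last m)) := by
  ext i
  cases i using Fin.lastCases <;>
    simp [wAct, snocPerm_inv, snocPerm_castSucc, snocPerm_last, Fin.init]

lemma altSum_eq_altSum_snoc {G : (Fin (m + 1) → ℚ) → M} {β : Fin (m + 1) → ℚ} {c : ℚ}
    (hG : ∀ x, x (Fin.last m) < c → G x = 0) (hβ : ∀ i : Fin m, |β i.castSucc| < c)
    (hlast : -β (Fin.last m) < c) :
    altSum G β = altSum (fun x => G (Fin.snoc x (β (Fin.last m)))) (Fin.init β) := by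
  simp only [altSum, ← Fintype.sum_prod_type']
  symm
  refine Fintype.sum_of_injective
    (fun p : Equiv.Perm (Fin m) × (Fin m → Bool) =>
      (snocPerm p.1, (Fin.snoc p.2 false : Fin (m + 1) → Bool))) ?_ _ _ ?_ ?_
  · rintro ⟨σ, ε⟩ ⟨τ, δ⟩ h
    exact Prod.ext (snocPerm_injective (congrArg Prod.fst h))
      (Fin.snoc_injective2 (α := fun _ => Bool) (congrArg Prod.snd h)).1
  · rintro ⟨σ, ε⟩ hσε
    suffices wAct σ ε β (Fin.last m) < c by rw [hG _ this, smul_zero, ite_self]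
    by_cases hσ : σ⁻¹ (Fin.last m) = Fin.last m
    · obtain ⟨τ, rfl⟩ := exists_snocPerm_eq (Equiv.Perm.inv_eq_iff_eq.1 hσ).symm
      have hε : ε (Fin.last m) = true := by
        by_contra h
        exact hσε ⟨(τ, Fin.init ε), Prod.ext rfl (by
          simpa [Bool.not_eq_true _ ▸ h] using Fin.snoc_init_self ε)⟩
      simpa [wAct, hε, hσ] using hlast
    · obtain ⟨i, hi⟩ := Fin.exists_castSucc_eq.2 hσ
      calc wAct σ ε β (Fin.last m) ≤ |wAct σ ε β (Fin.last m)| := le_abs_self _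
        _ = |β i.castSucc| := by rw [wAct, ← hi, abs_mul]; split_ifs <;> simp
        _ < c := hβ i
  · rintro ⟨σ, ε⟩
    simp [signProd, wDet, Fin.prod_univ_castSucc, sign_snocPerm, wAct_snocPerm_snoc]

lemma altSum_kostantQ_succ {κ β : Fin (m + 1) → ℚ} {l : ℕ} (hκ : 0 < κ (Fin.last m))
    (hβ : ∀ i : Fin m, |β i.castSucc| < κ (Fin.last m))
    (hl : β (Fin.last m) = κ (Fin.last m) + l) :
    altSum (fun x => kostantQ (rootsD (m + 1)) (x - κ)) β =
      PowerSeries.X ^ l * ∑ t ∈ vectorMonomials m l,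
        altSum (fun x => kostantQ (rootsD m) (x - Fin.init κ))
          (Fin.init β + fun i => (weight t i : ℚ)) := by
  rw [altSum_eq_altSum_snoc (c := κ (Fin.last m)) _ hβ (by rw [hl]; linarith)]
  · have hK (x : Fin m → ℚ) : (Fin.snoc x (β (Fin.last m)) - κ : Fin (m + 1) → ℚ) =
        Fin.snoc (x - Fin.init κ) l := by
      ext i
      cases i using Fin.lastCases <;> simp [Fin.init, hl]
    simp only [hK, kostantQ_rootsD_succ, sub_add_eq_add_sub]
    rw [← altSum_sum_add_weight, ← AddMonoidHom.coe_mulLeft, map_altSum]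
  · intro x hx
    exact kostantQ_rootsD_of_last_neg (sub_neg.2 hx)

end StabilizerOfLast

section SignReversing

/-- Cancellation by the sign-reversing involution that flips `x` at its first bad index. -/
lemma sum_eq_sum_filter_of_flip_first {ι α M : Type*} [LinearOrder ι] [WellFoundedLT ι]
    [AddCommGroup M] [IsAddTorsionFree M] {s : Finset α} {f : α → M} {bad : ι → α → Prop}
    {good : α → Prop} [DecidablePred good] (hgood : ∀ x, good x ↔ ∀ i, ¬ bad i x)
    (flip : ι → α → α)
    (hflip : ∀ i, ∀ x ∈ s, bad i x → (∀ j < i, ¬ bad j x) → flip i x ∈ s ∧ bad i (flip i x) ∧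
      (∀ j < i, ¬ bad j (flip i x)) ∧ flip i (flip i x) = x ∧ f (flip i x) = -f x) :
    ∑ x ∈ s, f x = ∑ x ∈ s with good x, f x := by
  classical
  rw [← sum_filter_add_sum_filter_not s good, add_eq_left]
  have exists_first (x) (hx : x ∈ {x ∈ s | ¬ good x}) :
      ∃ i, bad i x ∧ ∀ j < i, ¬ bad j x := by
    obtain ⟨i, hi, hmin⟩ :=
      wellFounded_lt.has_min {i | bad i x}
        (not_forall_not.1 (mt (hgood x).2 (mem_filter.1 hx).2))
    exact ⟨i, hi, fun j hj hbad => hmin j hbad hj⟩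
  choose first hbad hmin using exists_first
  have flip_spec (x) (hx) := hflip (first x hx) x (mem_filter.1 hx).1 (hbad x hx) (hmin x hx)
  have flip_mem (x) (hx) : flip (first x hx) x ∈ {x ∈ s | ¬ good x} :=
    mem_filter.2 ⟨(flip_spec x hx).1, fun h => (hgood _).1 h _ (flip_spec x hx).2.1⟩
  have first_flip (x) (hx) : first (flip (first x hx) x) (flip_mem x hx) = first x hx :=
    le_antisymm (not_lt.1 fun h => hmin _ (flip_mem x hx) _ h (flip_spec x hx).2.1)
      (not_lt.1 fun h => (flip_spec x hx).2.2.1 _ h (hbad _ (flip_mem x hx)))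
  refine sum_involution (fun x hx => flip (first x hx) x) (fun x hx => ?_)
    (fun x hx hne heq => ?_) flip_mem (fun x hx => ?_)
  · rw [(flip_spec x hx).2.2.2.2, add_neg_cancel]
  · exact hne (self_eq_neg.1 (by simpa only [heq] using (flip_spec x hx).2.2.2.2))
  · rw [first_flip x hx, (flip_spec x hx).2.2.2.1]

end SignReversing

section HeadAbs

variable {d : ℕ}

/-- The weight `(l_m, …, l_2, |l_1|)`. The simple coroots of type `D_m` take nonnegative values on
`l` iff this sequence is monotone. -/
def headAbs (l : Fin (d + 1) → ℤ) (i : Fin (d + 1)) : ℤ := if i = 0 then |l i| else l i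

lemma headAbs_zero (l : Fin (d + 1) → ℤ) : headAbs l 0 = |l 0| := if_pos rfl

lemma headAbs_succ (l : Fin (d + 1) → ℤ) (k : Fin d) : headAbs l k.succ = l k.succ :=
  if_neg k.succ_ne_zero

lemma headAbs_eq_or (l : Fin (d + 1) → ℤ) (i : Fin (d + 1)) :
    headAbs l i = l i ∨ i = 0 ∧ l i < 0 ∧ headAbs l i = -l i := by
  grind [headAbs]

lemma monotone_headAbs_iff {l : Fin (d + 1) → ℤ} :
    Monotone (headAbs l) ↔ ∀ k : Fin d, headAbs l k.castSucc ≤ l k.succ := by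
  simp only [Fin.monotone_iff_le_succ, headAbs_succ]

lemma dominantD_intCast_iff {l : Fin (d + 1) → ℤ} :
    DominantD (fun i => (l i : ℚ)) ↔ Monotone (headAbs l) := by
  have headAbs_of_pos {i : Fin (d + 1)} (hi : 0 < (i : ℕ)) : headAbs l i = l i :=
    if_neg (Fin.pos_iff_ne_zero.1 hi)
  simp only [DominantD, ← Int.cast_abs, Int.cast_le]
  constructor
  · rintro ⟨hle, habs, -⟩
    refine monotone_headAbs_iff.2 fun k => ?_
    rcases (Fin.zero_le k.castSucc).eq_or_lt' with hk | hk
    · rw [hk, headAbs_zero]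
      exact habs d.succ_pos k.succ k.succ_pos
    · rw [headAbs_of_pos hk]
      exact hle _ _ k.castSucc_le_succ hk
  · refine fun h => ⟨fun i j hij hi => ?_, fun _ j hj => ?_, .inl fun i => ⟨l i, rfl⟩⟩
    · simpa only [headAbs_of_pos hi, headAbs_of_pos (hi.trans_le hij)] using h hij
    · exact (headAbs_zero l).symm.trans_le ((h j.zero_le).trans_eq (headAbs_of_pos hj))

end HeadAbs

section LocalChange

variable {d : ℕ}

/-- The family `f` with its `k`-th and `k+1`-st entries replaced by `x` and `y`. -/
def replaceAt (k : Fin d) (x y : ℤ) (f : Fin (d + 1) → ℤ) : Fin (d + 1) → ℤ :=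
  Function.update (Function.update f k.castSucc x) k.succ y

@[simp] lemma replaceAt_castSucc (k : Fin d) (x y : ℤ) (f : Fin (d + 1) → ℤ) :
    replaceAt k x y f k.castSucc = x := by
  simp [replaceAt, k.castSucc_lt_succ.ne]

@[simp] lemma replaceAt_succ (k : Fin d) (x y : ℤ) (f : Fin (d + 1) → ℤ) :
    replaceAt k x y f k.succ = y := by
  simp [replaceAt]

lemma replaceAt_of_ne {k : Fin d} {i : Fin (d + 1)} (h : i ≠ k.castSucc) (h' : i ≠ k.succ)
    (x y : ℤ) (f : Fin (d + 1) → ℤ) : replaceAt k x y f i = f i := by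
  simp [replaceAt, h, h']

@[simp] lemma replaceAt_replaceAt (k : Fin d) (x y x' y' : ℤ) (f : Fin (d + 1) → ℤ) :
    replaceAt k x y (replaceAt k x' y' f) = replaceAt k x y f := by
  ext i
  by_cases h : i = k.castSucc <;> by_cases h' : i = k.succ <;>
    simp_all [replaceAt]

@[simp] lemma replaceAt_self (k : Fin d) (f : Fin (d + 1) → ℤ) :
    replaceAt k (f k.castSucc) (f k.succ) f = f := by
  simp [replaceAt]

lemma sum_replaceAt (k : Fin d) (x y : ℤ) (f : Fin (d + 1) → ℤ) :
    ∑ i, replaceAt k x y f i = ∑ i, f i + (x + y - (f k.castSucc + f k.succ)) := by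
  rw [← sub_eq_iff_eq_add', ← sum_sub_distrib,
    Fintype.sum_eq_add k.castSucc k.succ k.castSucc_lt_succ.ne fun i hi => by
      rw [replaceAt_of_ne hi.1 hi.2, sub_self]]
  simp only [replaceAt_castSucc, replaceAt_succ]
  ring

end LocalChange

section DownUpPaths

variable {d l : ℕ} {c : Fin (d + 1) → ℤ} {p : (Fin (d + 1) → ℤ) × (Fin (d + 1) → ℤ)}

/-- The pairs `(a, b)` such that `l` unit steps lead from `c` down to `a` and then up to `b`. The
monomial `(k, k̄)` of `vectorMonomials` is encoded as `(c - k, c - k + k̄)`, in which the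
cancellations of the Pieri rule are local. -/
def downUpPaths (c : Fin (d + 1) → ℤ) (l : ℕ) :
    Finset ((Fin (d + 1) → ℤ) × (Fin (d + 1) → ℤ)) :=
  (vectorMonomials (d + 1) l).image fun t => (fun i => c i - t.1 i, c + weight t)

lemma mem_downUpPaths :
    p ∈ downUpPaths c l ↔ (∀ i, p.1 i ≤ c i) ∧ (∀ i, p.1 i ≤ p.2 i) ∧
      ∑ i, (c i + p.2 i - 2 * p.1 i) = l := by
  simp only [downUpPaths, mem_image, mem_vectorMonomials]
  constructor
  · rintro ⟨t, rfl, rfl⟩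
    refine ⟨fun i => by simp, fun i => by simp [weight]; omega, ?_⟩
    push_cast
    exact sum_congr rfl fun i _ => by simp [weight]; ring
  · rintro ⟨hc, hp, hl⟩
    have down_eq (i) : ((c i - p.1 i).toNat : ℤ) = c i - p.1 i :=
      Int.toNat_of_nonneg (sub_nonneg.2 (hc i))
    have up_eq (i) : ((p.2 i - p.1 i).toNat : ℤ) = p.2 i - p.1 i :=
      Int.toNat_of_nonneg (sub_nonneg.2 (hp i))
    refine ⟨(fun i => (c i - p.1 i).toNat, fun i => (p.2 i - p.1 i).toNat), ?_, ?_⟩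
    · zify
      rw [← hl]
      exact sum_congr rfl fun i _ => by rw [down_eq, up_eq]; ring
    · ext i <;> simp only [Pi.add_apply, weight, down_eq, up_eq] <;> ring

lemma sum_downUpPaths {M : Type*} [AddCommMonoid M]
    (f : (Fin (d + 1) → ℤ) × (Fin (d + 1) → ℤ) → M) :
    ∑ p ∈ downUpPaths c l, f p =
      ∑ t ∈ vectorMonomials (d + 1) l, f (fun i => c i - t.1 i, c + weight t) := by
  refine sum_image fun t _ t' _ h => ?_
  simp only [Prod.mk.injEq, funext_iff, Pi.add_apply, weight] at h
  ext i <;> have := h.1 i <;> have := h.2 i <;> omega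

lemma replaceAt_mem_downUpPaths {k : Fin d} {x y z w : ℤ} (hp : p ∈ downUpPaths c l)
    (hx : x ≤ c k.castSucc) (hy : y ≤ c k.succ) (hxz : x ≤ z) (hyw : y ≤ w)
    (hl : z + w - 2 * (x + y) =
      p.2 k.castSucc + p.2 k.succ - 2 * (p.1 k.castSucc + p.1 k.succ)) :
    (replaceAt k x y p.1, replaceAt k z w p.2) ∈ downUpPaths c l := by
  rw [mem_downUpPaths] at hp ⊢
  obtain ⟨hc, hp, hsum⟩ := hp
  refine ⟨fun i => ?_, fun i => ?_, ?_⟩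
  · by_cases h : i = k.castSucc <;> by_cases h' : i = k.succ <;>
      simp_all [replaceAt_of_ne, hc i]
  · by_cases h : i = k.castSucc <;> by_cases h' : i = k.succ <;>
      simp_all [replaceAt_of_ne, hp i]
  · simp only [sum_sub_distrib, sum_add_distrib, ← mul_sum, sum_replaceAt] at hsum ⊢
    linarith

end DownUpPaths

section Cancellation

open OrderDual

variable {d l : ℕ} {c : Fin (d + 1) → ℤ} {M : Type*} [AddCommGroup M]
  {F : (Fin (d + 1) → ℤ) → M} {p : (Fin (d + 1) → ℤ) × (Fin (d + 1) → ℤ)}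

/-- `F` is antisymmetric under the reflections in the roots `e_{k+1} - e_k` and `e_{k+1} + e_k`. -/
def IsAlternating (F : (Fin (d + 1) → ℤ) → M) : Prop :=
  ∀ (k : Fin d) (b : Fin (d + 1) → ℤ),
    F (replaceAt k (b k.succ) (b k.castSucc) b) = -F b ∧
      F (replaceAt k (-b k.succ) (-b k.castSucc) b) = -F b

/-- The interlacing condition `|b_1| < a_2`, `b_2 < a_3`, …, `b_{m-1} < a_m`. -/
def Interlaces (a b : Fin (d + 1) → ℤ) : Prop :=
  ∀ k : Fin d, headAbs b k.castSucc < a k.succ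

instance (a b : Fin (d + 1) → ℤ) : Decidable (Interlaces a b) :=
  inferInstanceAs (Decidable (∀ k : Fin d, headAbs b k.castSucc < a k.succ))

/-- The reflection of `p = (a, b)` in position `k`, matching up the paths that violate
`Interlaces a c` there. The reflection in `e_{k+1} + e_k` is needed only for `k = 0`, `c 0 < 0`. -/
def flipValley (c : Fin (d + 1) → ℤ) (k : Fin d)
    (p : (Fin (d + 1) → ℤ) × (Fin (d + 1) → ℤ)) : (Fin (d + 1) → ℤ) × (Fin (d + 1) → ℤ) :=
  if headAbs c k.castSucc = c k.castSucc then
    (replaceAt k (p.1 k.succ) (p.1 k.castSucc) p.1, replaceAt k (p.2 k.succ) (p.2 k.castSucc) p.2)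
  else
    (replaceAt k (p.1 k.succ + c k.castSucc - p.2 k.succ)
        (p.1 k.castSucc - c k.castSucc - p.2 k.castSucc) p.1,
      replaceAt k (-p.2 k.succ) (-p.2 k.castSucc) p.2)

/-- The reflection of `p = (a, b)` in position `k`, matching up the paths that violate
`Interlaces a b` there. The reflection in `e_{k+1} + e_k` is needed only for `k = 0`, `b 0 < 0`. -/
def flipEnd (k : Fin d) (p : (Fin (d + 1) → ℤ) × (Fin (d + 1) → ℤ)) :
    (Fin (d + 1) → ℤ) × (Fin (d + 1) → ℤ) :=
  if headAbs p.2 k.castSucc = p.2 k.castSucc then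
    (p.1, replaceAt k (p.2 k.succ) (p.2 k.castSucc) p.2)
  else
    (replaceAt k (p.1 k.castSucc - p.2 k.castSucc - p.2 k.succ) (p.1 k.succ) p.1,
      replaceAt k (-p.2 k.succ) (-p.2 k.castSucc) p.2)

lemma IsAlternating.map_flipValley (hF : IsAlternating F) (k : Fin d)
    (p : (Fin (d + 1) → ℤ) × (Fin (d + 1) → ℤ)) : F (flipValley c k p).2 = -F p.2 := by
  unfold flipValley
  split_ifs
  exacts [(hF k p.2).1, (hF k p.2).2]

lemma IsAlternating.map_flipEnd (hF : IsAlternating F) (k : Fin d)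
    (p : (Fin (d + 1) → ℤ) × (Fin (d + 1) → ℤ)) : F (flipEnd k p).2 = -F p.2 := by
  unfold flipEnd
  split_ifs
  exacts [(hF k p.2).1, (hF k p.2).2]

lemma flipValley_flipValley (c : Fin (d + 1) → ℤ) (k : Fin d)
    (p : (Fin (d + 1) → ℤ) × (Fin (d + 1) → ℤ)) : flipValley c k (flipValley c k p) = p := by
  have reflect_reflect (x y z : ℤ) : x - y - z + y + z = x ∧ x + y - z - y + z = x := by
    constructor <;> ring
  by_cases h : headAbs c k.castSucc = c k.castSucc <;> simp [flipValley, h, reflect_reflect]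

lemma flipValley_mem_downUpPaths {k : Fin d} (hc : headAbs c k.castSucc ≤ c k.succ)
    (hp : p ∈ downUpPaths c l) (hbad : p.1 k.succ ≤ headAbs c k.castSucc) :
    flipValley c k p ∈ downUpPaths c l := by
  obtain ⟨hdown, hup, -⟩ := mem_downUpPaths.1 hp
  have := hdown k.castSucc
  have := hup k.castSucc
  have := hup k.succ
  rcases headAbs_eq_or c k.castSucc with h | ⟨-, hneg, h⟩
  · rw [flipValley, if_pos h]
    exact replaceAt_mem_downUpPaths hp (by omega) (by omega) ‹_› ‹_› (by omega)
  · rw [flipValley, if_neg (by omega)]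
    exact replaceAt_mem_downUpPaths hp (by omega) (by omega) (by omega) (by omega) (by omega)

lemma flipValley_fst_succ_le {k : Fin d} (hp : p ∈ downUpPaths c l) :
    (flipValley c k p).1 k.succ ≤ headAbs c k.castSucc := by
  obtain ⟨hdown, hup, -⟩ := mem_downUpPaths.1 hp
  have := hdown k.castSucc
  have := hup k.castSucc
  rcases headAbs_eq_or c k.castSucc with h | ⟨-, hneg, h⟩
  · rw [flipValley, if_pos h]
    simp only [replaceAt_succ]
    omega
  · rw [flipValley, if_neg (by omega)]
    simp only [replaceAt_succ]
    omega

lemma flipValley_fst_succ_of_lt {k k' : Fin d} (hk : k < k')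
    (p : (Fin (d + 1) → ℤ) × (Fin (d + 1) → ℤ)) : (flipValley c k p).1 k'.succ = p.1 k'.succ := by
  have ne_castSucc : k'.succ ≠ k.castSucc :=
    (k.castSucc_lt_succ.trans (Fin.succ_lt_succ_iff.2 hk)).ne'
  have ne_succ : k'.succ ≠ k.succ := (Fin.succ_lt_succ_iff.2 hk).ne'
  unfold flipValley
  split_ifs <;> exact replaceAt_of_ne ne_castSucc ne_succ ..

lemma sum_downUpPaths_eq_sum_interlaces_start [IsAddTorsionFree M] (hF : IsAlternating F)
    (hc : Monotone (headAbs c)) :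
    ∑ p ∈ downUpPaths c l, F p.2 = ∑ p ∈ downUpPaths c l with Interlaces p.1 c, F p.2 :=
  -- Position `k` involves `a k.succ` and `a k.castSucc`, hence reflect at the last violation.
  sum_eq_sum_filter_of_flip_first (ι := (Fin d)ᵒᵈ)
    (bad := fun k p => p.1 (ofDual k).succ ≤ headAbs c (ofDual k).castSucc)
    (fun p => by simp only [Interlaces, OrderDual.forall, ofDual_toDual, not_le])
    (fun k => flipValley c (ofDual k))
    fun k p hp hbad hfirst =>
      ⟨flipValley_mem_downUpPaths (monotone_headAbs_iff.1 hc _) hp hbad, flipValley_fst_succ_le hp,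
        fun k' hk' => by
          rw [flipValley_fst_succ_of_lt (ofDual_lt_ofDual.2 hk')]
          exact hfirst k' hk',
        flipValley_flipValley .., hF.map_flipValley ..⟩

lemma flipEnd_mem_downUpPaths {k : Fin d} (hp : p ∈ downUpPaths c l)
    (hc : headAbs c k.castSucc < p.1 k.succ) (hbad : p.1 k.succ ≤ headAbs p.2 k.castSucc) :
    flipEnd k p ∈ downUpPaths c l := by
  obtain ⟨hdown, hup, -⟩ := mem_downUpPaths.1 hp
  have := hdown k.castSucc
  have := hdown k.succ
  have := hup k.castSucc
  have := hup k.succ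
  rcases headAbs_eq_or p.2 k.castSucc with h | ⟨hk, hneg, h⟩
  · have := headAbs_eq_or c k.castSucc
    rw [flipEnd, if_pos h]
    nth_rw 1 [← replaceAt_self k p.1]
    exact replaceAt_mem_downUpPaths hp (by omega) (by omega) (by omega) (by omega) (by omega)
  · have : headAbs c k.castSucc = |c k.castSucc| := if_pos hk
    have := neg_abs_le (c k.castSucc)
    rw [flipEnd, if_neg (by omega)]
    exact replaceAt_mem_downUpPaths hp (by omega) (by omega) (by omega) (by omega) (by omega)

lemma flipEnd_fst_succ (k k' : Fin d) (p : (Fin (d + 1) → ℤ) × (Fin (d + 1) → ℤ)) :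
    (flipEnd k p).1 k'.succ = p.1 k'.succ := by
  rcases headAbs_eq_or p.2 k.castSucc with h | ⟨hk, hneg, h⟩
  · rw [flipEnd, if_pos h]
  · rw [flipEnd, if_neg (by omega)]
    rcases eq_or_ne k' k with rfl | hne
    · exact replaceAt_succ ..
    · exact replaceAt_of_ne (by simp [hk]) (by simpa using hne) ..

lemma flipEnd_snd_castSucc_of_lt {k k' : Fin d} (hk : k' < k)
    (p : (Fin (d + 1) → ℤ) × (Fin (d + 1) → ℤ)) :
    (flipEnd k p).2 k'.castSucc = p.2 k'.castSucc := by
  have ne_castSucc : k'.castSucc ≠ k.castSucc := (Fin.castSucc_lt_castSucc_iff.2 hk).ne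
  have ne_succ : k'.castSucc ≠ k.succ :=
    ((Fin.castSucc_lt_castSucc_iff.2 hk).trans k.castSucc_lt_succ).ne
  unfold flipEnd
  split_ifs <;> exact replaceAt_of_ne ne_castSucc ne_succ ..

lemma headAbs_flipEnd_castSucc {k : Fin d} (hp : p ∈ downUpPaths c l)
    (hc : headAbs c k.castSucc < p.1 k.succ) :
    headAbs (flipEnd k p).2 k.castSucc = p.2 k.succ := by
  have := (mem_downUpPaths.1 hp).2.1 k.succ
  have pos_of_eq_zero (hk : k.castSucc = 0) : 0 < p.2 k.succ := by
    rw [headAbs, if_pos hk] at hc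
    linarith [abs_nonneg (c k.castSucc)]
  rcases headAbs_eq_or p.2 k.castSucc with h | ⟨hk, hneg, h⟩
  · rw [flipEnd, if_pos h]
    simp only [headAbs, replaceAt_castSucc]
    split_ifs with hk
    exacts [abs_of_pos (pos_of_eq_zero hk), rfl]
  · rw [flipEnd, if_neg (by omega)]
    simp only [headAbs, if_pos hk, replaceAt_castSucc, abs_neg, abs_of_pos (pos_of_eq_zero hk)]

lemma flipEnd_flipEnd {k : Fin d} (hp : p ∈ downUpPaths c l)
    (hc : headAbs c k.castSucc < p.1 k.succ) : flipEnd k (flipEnd k p) = p := by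
  have headAbs_flipEnd := headAbs_flipEnd_castSucc hp hc
  have := (mem_downUpPaths.1 hp).2.1 k.succ
  rcases headAbs_eq_or p.2 k.castSucc with h | ⟨hk, hneg, h⟩
  · have flip_eq : flipEnd k p = _ := if_pos h
    rw [flip_eq] at headAbs_flipEnd ⊢
    simp [flipEnd, headAbs_flipEnd]
  · have flip_eq : flipEnd k p = _ := if_neg (by omega)
    rw [headAbs, if_pos hk] at hc
    have ne_neg : p.2 k.succ ≠ -p.2 k.succ := by linarith [abs_nonneg (c k.castSucc)]
    rw [flip_eq] at headAbs_flipEnd ⊢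
    simp [flipEnd, headAbs_flipEnd, ne_neg]

lemma sum_interlaces_start_eq_sum_interlaces_end [IsAddTorsionFree M] (hF : IsAlternating F) :
    ∑ p ∈ downUpPaths c l with Interlaces p.1 c, F p.2 =
      ∑ p ∈ downUpPaths c l with Interlaces p.1 c ∧ Interlaces p.1 p.2, F p.2 := by
  rw [← filter_filter]
  refine sum_eq_sum_filter_of_flip_first (bad := fun k p => p.1 k.succ ≤ headAbs p.2 k.castSucc)
    (fun p => by simp only [Interlaces, not_le]) flipEnd fun k p hp hbad hfirst => ?_
  obtain ⟨hp, hc⟩ := mem_filter.1 hp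
  refine ⟨mem_filter.2 ⟨flipEnd_mem_downUpPaths hp (hc k) hbad, fun k' => ?_⟩, ?_,
    fun k' hk' => ?_, flipEnd_flipEnd hp (hc k), hF.map_flipEnd ..⟩
  · rw [flipEnd_fst_succ]
    exact hc k'
  · rw [flipEnd_fst_succ, headAbs_flipEnd_castSucc hp (hc k)]
    exact (mem_downUpPaths.1 hp).2.1 k.succ
  · rw [flipEnd_fst_succ, headAbs, flipEnd_snd_castSucc_of_lt hk']
    exact hfirst k' hk'

end Cancellation

section PieriRule

variable {d : ℕ} {γ : Fin (d + 1) → ℤ} {t : (Fin (d + 1) → ℕ) × (Fin (d + 1) → ℕ)}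

lemma isAlternating_altSum {M : Type*} [AddCommGroup M] (G : (Fin (d + 1) → ℚ) → M) :
    IsAlternating fun b : Fin (d + 1) → ℤ => altSum G fun i => (b i : ℚ) := by
  intro k b
  have hne : k.castSucc ≠ k.succ := k.castSucc_lt_succ.ne
  constructor
  · rw [← altSum_wAct_swap G _ hne (δ := fun _ => false) (by simp [signProd])]
    refine congrArg (altSum G) (funext fun i => ?_)
    rcases eq_or_ne i k.castSucc with rfl | h
    · simp [wAct]
    rcases eq_or_ne i k.succ with rfl | h'
    · simp [wAct]
    · simp [wAct, replaceAt_of_ne h h', Equiv.swap_apply_of_ne_of_ne h h']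
  · rw [← altSum_wAct_swap G _ hne (δ := fun i => decide (i = k.castSucc ∨ i = k.succ))
      (by simp [signProd, prod_ite, filter_or, filter_eq', hne])]
    refine congrArg (altSum G) (funext fun i => ?_)
    rcases eq_or_ne i k.castSucc with rfl | h
    · simp [wAct]
    rcases eq_or_ne i k.succ with rfl | h'
    · simp [wAct]
    · simp [wAct, h, h', replaceAt_of_ne h h', Equiv.swap_apply_of_ne_of_ne h h']

/-- The conditions on the monomial `t = (k, k̄)` in the Pieri rule of type `D`, stated in terms of
`γ_i - k_i = λ_i - k̄_i`. -/
def IsPieri (γ : Fin (d + 1) → ℤ) (t : (Fin (d + 1) → ℕ) × (Fin (d + 1) → ℕ)) : Prop :=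
  ∀ k : Fin d, headAbs γ k.castSucc ≤ γ k.succ - t.1 k.succ ∧
    headAbs (γ + weight t) k.castSucc ≤ γ k.succ - t.1 k.succ

instance : DecidablePred (IsPieri γ) := fun t =>
  inferInstanceAs (Decidable (∀ k : Fin d, headAbs γ k.castSucc ≤ γ k.succ - t.1 k.succ ∧
    headAbs (γ + weight t) k.castSucc ≤ γ k.succ - t.1 k.succ))

lemma IsPieri.monotone_headAbs (h : IsPieri γ t) : Monotone (headAbs (γ + weight t)) :=
  monotone_headAbs_iff.2 fun k => (h k).2.trans (by simp [weight]; omega)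

lemma headAbs_add_val (b : Fin (d + 1) → ℤ) (i : Fin (d + 1)) :
    headAbs (fun i => b i + (i : ℕ)) i = headAbs b i + (i : ℕ) := by
  by_cases h : i = 0 <;> simp [headAbs, h]

lemma interlaces_iff_isPieri :
    Interlaces (fun i => γ i + (i : ℕ) - t.1 i) (fun i => γ i + (i : ℕ)) ∧
      Interlaces (fun i => γ i + (i : ℕ) - t.1 i) ((fun i => γ i + ((i : ℕ) : ℤ)) + weight t) ↔
        IsPieri γ t := by
  have add_weight : (fun i => γ i + ((i : ℕ) : ℤ)) + weight t =
      fun i => (γ + weight t) i + (i : ℕ) := by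
    ext i
    simp only [Pi.add_apply]
    ring
  rw [Interlaces, Interlaces, add_weight, ← forall_and]
  refine forall_congr' fun k => ?_
  simp only [headAbs_add_val, Fin.val_castSucc, Fin.val_succ]
  push_cast
  constructor <;> rintro ⟨h, h'⟩ <;> constructor <;> linarith

lemma sum_vectorMonomials_eq_sum_isPieri {M : Type*} [AddCommGroup M] [IsAddTorsionFree M]
    {F : (Fin (d + 1) → ℤ) → M} (hF : IsAlternating F) (hγ : Monotone (headAbs γ)) (l : ℕ) :
    ∑ t ∈ vectorMonomials (d + 1) l, F ((fun i => γ i + (i : ℕ)) + weight t) =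
      ∑ t ∈ vectorMonomials (d + 1) l with IsPieri γ t,
        F ((fun i => γ i + (i : ℕ)) + weight t) := by
  have hc : Monotone (headAbs fun i => γ i + (i : ℕ)) := fun i j hij => by
    rw [headAbs_add_val, headAbs_add_val]
    exact add_le_add (hγ hij) (by exact_mod_cast hij)
  have := (sum_downUpPaths_eq_sum_interlaces_start hF hc (l := l)).trans
    (sum_interlaces_start_eq_sum_interlaces_end hF)
  rw [sum_filter, sum_downUpPaths, sum_downUpPaths] at this
  simpa only [interlaces_iff_isPieri, sum_filter] using this

/-- A monomial divisible by no `x_1 x̄_1`. -/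
def IsHeadReduced (t : (Fin (d + 1) → ℕ) × (Fin (d + 1) → ℕ)) : Prop := min (t.1 0) (t.2 0) = 0

instance : DecidablePred (IsHeadReduced (d := d)) := fun t =>
  inferInstanceAs (Decidable (min (t.1 0) (t.2 0) = 0))

lemma isPieri_iff_head_tail :
    IsPieri γ t ↔
      (∀ h : 1 < d + 1, |γ 0| ≤ γ ⟨1, h⟩ - t.1 ⟨1, h⟩ ∧
        |γ 0 + weight t 0| ≤ γ ⟨1, h⟩ - t.1 ⟨1, h⟩) ∧
      ∀ i : Fin (d + 1), 1 ≤ (i : ℕ) → ∀ h : (i : ℕ) + 1 < d + 1,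
        γ i ≤ γ ⟨i + 1, h⟩ - t.1 ⟨i + 1, h⟩ ∧
          γ i + weight t i ≤ γ ⟨i + 1, h⟩ - t.1 ⟨i + 1, h⟩ := by
  have headAbs_of_pos {i : Fin (d + 1)} (hi : 1 ≤ (i : ℕ)) (b : Fin (d + 1) → ℤ) :
      headAbs b i = b i :=
    if_neg (Fin.pos_iff_ne_zero.1 hi)
  constructor
  · refine fun hP => ⟨fun h => hP ⟨0, Nat.lt_of_succ_lt_succ h⟩, fun i hi h => ?_⟩
    have := hP ⟨i, Nat.lt_of_succ_lt_succ h⟩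
    rwa [Fin.castSucc_mk, headAbs_of_pos hi, headAbs_of_pos hi] at this
  · rintro ⟨hhead, htail⟩ ⟨_ | i, hi⟩
    · exact hhead (Nat.succ_lt_succ hi)
    · rw [headAbs_of_pos (by simp), headAbs_of_pos (by simp)]
      exact htail ⟨i + 1, _⟩ (by simp) (Nat.succ_lt_succ hi)

lemma dPieri_intCast (γ b : Fin (d + 1) → ℤ) (r : ℕ) :
    dPieri (fun i => (γ i : ℚ)) (fun i => (b i : ℚ)) r =
      #{t ∈ vectorMonomials (d + 1) r | (IsHeadReduced t ∧ IsPieri γ t) ∧ γ + weight t = b} := by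
  refine Nat.subtype_card _ fun t => ?_
  simp only [← Int.cast_natCast (R := ℚ), ← Int.cast_sub, ← Int.cast_add, ← Int.cast_neg,
    Int.cast_inj, Int.cast_le, Int.cast_nonneg_iff, Int.cast_lt_zero, mem_filter,
    mem_vectorMonomials, isPieri_iff_head_tail, IsHeadReduced, abs_le, Fin.zero_eta]
  constructor
  · rintro ⟨hr, ⟨hred, hhead, htail⟩, rfl⟩
    simp only [Pi.add_apply, weight] at *
    refine ⟨fun _ => hred, hr, fun i => by omega, fun h => ?_, fun i hi h => ?_,
      fun i hi h => ?_, fun h => ?_⟩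
    · have := hhead h
      omega
    · have := htail i hi h
      omega
    · have := htail i hi h
      omega
    · have := hhead h
      omega
  · rintro ⟨hred, hr, hweight, hhead, htail, htail', hhead'⟩
    have hb : γ + weight t = b := funext fun i => add_eq_of_eq_sub' (hweight i)
    subst hb
    simp only [Pi.add_apply, weight] at *
    refine ⟨hr, ⟨hred d.succ_pos, fun h => ?_, fun i hi h => ?_⟩, trivial⟩
    · have := hred d.succ_pos
      have := hhead h
      have := hhead' h
      omega
    · have := htail i hi h
      have := htail' i hi h
      omega

end PieriRule

section Stripping

variable {d : ℕ}

/-- The exponents of the monomial `(x_1 x̄_1)^s`, which has weight `0`. -/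
def headPower (d s : ℕ) : (Fin (d + 1) → ℕ) × (Fin (d + 1) → ℕ) := (Pi.single 0 s, Pi.single 0 s)

lemma add_headPower_mem_vectorMonomials {t : (Fin (d + 1) → ℕ) × (Fin (d + 1) → ℕ)} {s l : ℕ} :
    t + headPower d s ∈ vectorMonomials (d + 1) l ↔ ∑ i, (t.1 i + t.2 i) + 2 * s = l := by
  rw [mem_vectorMonomials]
  simp only [headPower, Prod.fst_add, Prod.snd_add, Pi.add_apply, add_add_add_comm,
    sum_add_distrib, sum_pi_single', mem_univ, if_true, two_mul]

lemma weight_add_headPower (t : (Fin (d + 1) → ℕ) × (Fin (d + 1) → ℕ)) (s : ℕ) :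
    weight (t + headPower d s) = weight t := by
  ext i
  simp [weight, headPower]

lemma isPieri_add_headPower {γ : Fin (d + 1) → ℤ} {t : (Fin (d + 1) → ℕ) × (Fin (d + 1) → ℕ)}
    {s : ℕ} : IsPieri γ (t + headPower d s) ↔ IsPieri γ t := by
  simp only [IsPieri, weight_add_headPower]
  simp [headPower]

lemma exists_isHeadReduced_add_headPower (t : (Fin (d + 1) → ℕ) × (Fin (d + 1) → ℕ)) :
    ∃ t' s, IsHeadReduced t' ∧ t' + headPower d s = t := by
  have single_le {s : ℕ} {f : Fin (d + 1) → ℕ} (h : s ≤ f 0) : Pi.single 0 s ≤ f :=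
    update_le_iff.2 ⟨h, fun _ _ => Nat.zero_le _⟩
  refine ⟨t - headPower d (min (t.1 0) (t.2 0)), min (t.1 0) (t.2 0), ?_, tsub_add_cancel_of_le
    (Prod.mk_le_mk.2 ⟨single_le (min_le_left ..), single_le (min_le_right ..)⟩)⟩
  simp only [IsHeadReduced, headPower, Prod.fst_sub, Prod.snd_sub, Pi.sub_apply, Pi.single_eq_same]
  omega

lemma IsHeadReduced.add_headPower_inj {t t' : (Fin (d + 1) → ℕ) × (Fin (d + 1) → ℕ)} {s s' : ℕ}
    (ht : IsHeadReduced t) (ht' : IsHeadReduced t')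
    (heq : t + headPower d s = t' + headPower d s') : t = t' ∧ s = s' := by
  have heq₁ := congrFun (congrArg Prod.fst heq) 0
  have heq₂ := congrFun (congrArg Prod.snd heq) 0
  simp only [headPower, Prod.fst_add, Prod.snd_add, Pi.add_apply, Pi.single_eq_same] at heq₁ heq₂
  rw [IsHeadReduced] at ht ht'
  obtain rfl : s = s' := by omega
  exact ⟨add_right_cancel heq, rfl⟩

lemma sum_vectorMonomials_eq_sum_isHeadReduced {M : Type*} [AddCommMonoid M]
    {H : (Fin (d + 1) → ℕ) × (Fin (d + 1) → ℕ) → M} (hH : ∀ t s, H (t + headPower d s) = H t)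
    (l : ℕ) :
    ∑ t ∈ vectorMonomials (d + 1) l, H t =
      ∑ p ∈ range (l + 1) ×ˢ range (l + 1),
        if p.1 + 2 * p.2 = l then
          ∑ t ∈ vectorMonomials (d + 1) p.1 with IsHeadReduced t, H t
        else 0 := by
  rw [← sum_filter, sum_sigma']
  symm
  refine sum_bij (fun x _ => x.2 + headPower d x.1.2) ?_ ?_ ?_ ?_
  · rintro ⟨p, t⟩ h
    simp only [mem_sigma, mem_filter, mem_vectorMonomials] at h
    rw [add_headPower_mem_vectorMonomials, h.2.1, h.1.2]
  · rintro ⟨⟨r, s⟩, t⟩ h ⟨⟨r', s'⟩, t'⟩ h' heq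
    simp only [mem_sigma, mem_filter] at h h'
    obtain ⟨rfl, rfl⟩ := h.2.2.add_headPower_inj h'.2.2 heq
    obtain rfl : r = r' := add_right_cancel (h.1.2.trans h'.1.2.symm)
    rfl
  · intro t ht
    obtain ⟨t, s, hred, rfl⟩ := exists_isHeadReduced_add_headPower t
    rw [add_headPower_mem_vectorMonomials] at ht
    refine ⟨⟨(∑ i, (t.1 i + t.2 i), s), t⟩, ?_, rfl⟩
    simp only [mem_sigma, mem_filter, mem_product, mem_range]
    exact ⟨by omega, mem_vectorMonomials.2 rfl, hred⟩
  · rintro ⟨p, t⟩ _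
    exact (hH _ _).symm

end Stripping

section PieriExpansion

variable {d : ℕ}

lemma finsum_mem_card_smul {α β M : Type*} [DecidableEq β] [AddCommGroup M] {S : Finset α}
    {φ : α → β} {P : Set β} {n : β → ℤ} (hφ : ∀ a ∈ S, φ a ∈ P)
    (hn : ∀ b ∈ P, n b = #{a ∈ S | φ a = b}) (G : β → M) :
    ∑ᶠ b ∈ P, n b • G b = ∑ a ∈ S, G (φ a) := by
  rw [sum_comp, finsum_mem_congr rfl fun b hb => by rw [hn b hb]]
  simp only [natCast_zsmul]
  refine finsum_mem_eq_sum_of_inter_support_eq _ ?_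
  ext b
  simp only [Set.mem_inter_iff, Function.mem_support, coe_image, and_congr_left_iff]
  refine fun hb => ⟨fun _ => ?_, ?_⟩
  · by_contra h
    refine hb ?_
    rw [card_eq_zero.2 (filter_eq_empty_iff.2 fun a ha hab => h ⟨a, ha, hab⟩), zero_smul]
  · rintro ⟨a, ha, rfl⟩
    exact hφ a ha

lemma sum_isHeadReduced_eq_finsum_dPieri {M : Type*} [AddCommGroup M] (G : (Fin (d + 1) → ℚ) → M)
    (γ : Fin (d + 1) → ℤ) (r : ℕ) :
    ∑ t ∈ vectorMonomials (d + 1) r with IsHeadReduced t ∧ IsPieri γ t,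
        G (fun i => ((γ + weight t) i : ℚ)) =
      ∑ᶠ lam ∈ {lam : Fin (d + 1) → ℚ | DominantD lam ∧ ∀ i, ∃ z : ℤ, lam i = z},
        (dPieri (fun i => (γ i : ℚ)) lam r : ℤ) • G lam := by
  refine (finsum_mem_card_smul (fun t ht => ?_) ?_ G).symm
  · exact ⟨dominantD_intCast_iff.2 (mem_filter.1 ht).2.2.monotone_headAbs, fun i => ⟨_, rfl⟩⟩
  · rintro lam ⟨-, hlam⟩
    choose b hb using hlam
    obtain rfl : lam = fun i => (b i : ℚ) := funext hb
    rw [dPieri_intCast, filter_filter]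
    simp only [funext_iff, Int.cast_inj]

end PieriExpansion

section TopRowReduction

lemma abs_le_abs_of_monotone_headAbs {d : ℕ} {b : Fin (d + 1) → ℤ} (h : Monotone (headAbs b))
    {i j : Fin (d + 1)} (hij : i ≤ j) : |b i| ≤ |b j| := by
  have abs_headAbs (i : Fin (d + 1)) : |headAbs b i| = |b i| := by
    rcases headAbs_eq_or b i with h | ⟨-, -, h⟩ <;> simp only [h, abs_neg]
  have headAbs_nonneg (i : Fin (d + 1)) : 0 ≤ headAbs b i :=
    (abs_nonneg (b 0)).trans (h (Fin.zero_le i))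
  rw [← abs_headAbs i, ← abs_headAbs j, abs_of_nonneg (headAbs_nonneg i)]
  exact (h hij).trans (le_abs_self _)

instance : IsAddTorsionFree (PowerSeries ℤ) :=
  inferInstanceAs (IsAddTorsionFree ((Unit →₀ ℕ) → ℤ))

lemma headAbs_init {d : ℕ} (b : Fin (d + 2) → ℤ) (i : Fin (d + 1)) :
    headAbs (Fin.init b) i = headAbs b i.castSucc := by
  simp [headAbs, Fin.init]

lemma KD_intCast {m : ℕ} (b : Fin m → ℤ) (mu : Fin m → ℚ) :
    KD m (fun i => (b i : ℚ)) mu =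
      altSum (fun x => kostantQ (rootsD m) (x - (mu + rhoD m)))
        fun i => ((b i + (i : ℕ) : ℤ) : ℚ) := by
  rw [KD_eq_altSum]
  refine congrArg (altSum _) (funext fun i => ?_)
  simp [rhoD]

lemma KD_eq_sum_vectorMonomials {m : ℕ} [NeZero m] {ν μ : Fin (m + 1) → ℤ} {l : ℕ}
    (h : ∀ i : Fin m, |ν i.castSucc| ≤ μ (Fin.last m)) (hl : ν (Fin.last m) = μ (Fin.last m) + l) :
    KD (m + 1) (fun i => (ν i : ℚ)) (fun i => (μ i : ℚ)) =
      PowerSeries.X ^ l * ∑ t ∈ vectorMonomials m l,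
        KD m (fun i => ((Fin.init ν + weight t) i : ℚ)) (Fin.init fun i => (μ i : ℚ)) := by
  have hm : 0 < m := Nat.pos_of_ne_zero (NeZero.ne m)
  have hμ : 0 ≤ μ (Fin.last m) := (abs_nonneg _).trans (h ⟨0, hm⟩)
  rw [KD_intCast, altSum_kostantQ_succ (l := l)]
  · simp only [KD_intCast]
    refine congrArg _ (sum_congr rfl fun t _ => congrArg (altSum _) (funext fun i => ?_))
    simp [Fin.init]
    ring
  · exact add_pos_of_nonneg_of_pos (Int.cast_nonneg hμ) (Nat.cast_pos.2 hm)
  · intro i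
    have hi := abs_le.1 (h i)
    simp only [Pi.add_apply, rhoD, Fin.val_last, Fin.val_castSucc]
    rw [abs_lt]
    constructor <;> norm_cast <;> omega
  · simp [rhoD, hl]
    ring

lemma sum_vectorMonomials_KD_eq {d : ℕ} {γ : Fin (d + 1) → ℤ} (hγ : Monotone (headAbs γ))
    (mu : Fin (d + 1) → ℚ) (l : ℕ) :
    ∑ t ∈ vectorMonomials (d + 1) l, KD (d + 1) (fun i => ((γ + weight t) i : ℚ)) mu =
      ∑ p ∈ range (l + 1) ×ˢ range (l + 1),
        if p.1 + 2 * p.2 = l then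
          ∑ᶠ lam ∈ {lam : Fin (d + 1) → ℚ | DominantD lam ∧ ∀ i, ∃ z : ℤ, lam i = z},
            (dPieri (fun i => (γ i : ℚ)) lam p.1 : ℤ) • KD (d + 1) lam mu
        else 0 := by
  set K := fun t : (Fin (d + 1) → ℕ) × (Fin (d + 1) → ℕ) =>
    KD (d + 1) (fun i => ((γ + weight t) i : ℚ)) mu
  have hK (t) : K t = altSum (fun x => kostantQ (rootsD (d + 1)) (x - (mu + rhoD (d + 1))))
      fun i => (((fun i => γ i + ((i : ℕ) : ℤ)) + weight t) i : ℚ) := by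
    simp only [K, KD_intCast, Pi.add_apply, add_right_comm]
  have hpieri : ∑ t ∈ vectorMonomials (d + 1) l, K t =
      ∑ t ∈ vectorMonomials (d + 1) l with IsPieri γ t, K t := by
    simp only [hK]
    exact sum_vectorMonomials_eq_sum_isPieri (isAlternating_altSum _) hγ l
  rw [hpieri, sum_filter, sum_vectorMonomials_eq_sum_isHeadReduced fun t s => by
    simp only [K, isPieri_add_headPower, weight_add_headPower]]
  simp only [← sum_filter, filter_filter, ← sum_isHeadReduced_eq_finsum_dPieri, K]

theorem KD_top_row_reduction_general (n : ℕ) (hn : 2 ≤ n) (ν μ : Fin n → ℤ)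
    (hν : DominantD (fun i => (ν i : ℚ)))
    (h1 : |ν ⟨n - 2, by omega⟩| ≤ μ ⟨n - 1, by omega⟩)
    (h2 : μ ⟨n - 1, by omega⟩ ≤ ν ⟨n - 1, by omega⟩) :
    KD n (fun i => (ν i : ℚ)) (fun i => (μ i : ℚ)) =
      (PowerSeries.X : PowerSeries ℤ) ^ (ν ⟨n - 1, by omega⟩ - μ ⟨n - 1, by omega⟩).toNat *
        ∑ p ∈ Finset.range ((ν ⟨n - 1, by omega⟩ - μ ⟨n - 1, by omega⟩).toNat + 1) ×ˢ
              Finset.range ((ν ⟨n - 1, by omega⟩ - μ ⟨n - 1, by omega⟩).toNat + 1),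
          if p.1 + 2 * p.2 = (ν ⟨n - 1, by omega⟩ - μ ⟨n - 1, by omega⟩).toNat then
            ∑ᶠ lam ∈ {lam : Fin (n - 1) → ℚ | DominantD lam ∧ ∀ i, ∃ z : ℤ, lam i = z},
              (dPieri (restrict1 fun i => (ν i : ℚ)) lam p.1 : ℤ) •
                KD (n - 1) lam (restrict1 fun i => (μ i : ℚ))
          else 0 := by
  obtain ⟨d, rfl⟩ := Nat.exists_eq_add_of_le' hn
  have hmono : Monotone (headAbs ν) := dominantD_intCast_iff.1 hν
  have hmono' : Monotone (headAbs (Fin.init ν : Fin (d + 1) → ℤ)) := fun i j hij => by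
    simpa only [headAbs_init] using hmono (Fin.castSucc_le_castSucc_iff.2 hij)
  have habs (i : Fin (d + 1)) : |ν i.castSucc| ≤ μ (Fin.last (d + 1)) :=
    (abs_le_abs_of_monotone_headAbs hmono (Fin.castSucc_le_castSucc_iff.2 i.le_last)).trans h1
  have hl : ν (Fin.last (d + 1)) = μ (Fin.last (d + 1)) +
      (ν (Fin.last (d + 1)) - μ (Fin.last (d + 1))).toNat := by
    have hle : μ (Fin.last (d + 1)) ≤ ν (Fin.last (d + 1)) := h2
    rw [Int.toNat_of_nonneg (sub_nonneg.2 hle), add_sub_cancel]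
  exact (KD_eq_sum_vectorMonomials habs hl).trans
    (congrArg _ (sum_vectorMonomials_KD_eq hmono' _ _))

end TopRowReduction

end

/-- If `μ_n ≥ ν_{n-1}` and `l = ν_n - μ_n ≥ 0` then
`K^{D_n}_{ν,μ}(q) = q^l ∑_{r+2m=l} ∑_λ d^λ_{ν',r} K^{D_{n-1}}_{λ,μ'}(q)`. -/
theorem KD_top_row_reduction (n : ℕ) (hn : 3 ≤ n) (ν μ : Fin n → ℤ)
    (hν : DominantD (fun i => (ν i : ℚ))) (hμ : DominantD (fun i => (μ i : ℚ)))
    (h1 : ν ⟨n - 2, by omega⟩ ≤ μ ⟨n - 1, by omega⟩)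
    (h2 : μ ⟨n - 1, by omega⟩ ≤ ν ⟨n - 1, by omega⟩) :
    KD n (fun i => (ν i : ℚ)) (fun i => (μ i : ℚ)) =
      (PowerSeries.X : PowerSeries ℤ) ^ (ν ⟨n - 1, by omega⟩ - μ ⟨n - 1, by omega⟩).toNat *
        ∑ p ∈ Finset.range ((ν ⟨n - 1, by omega⟩ - μ ⟨n - 1, by omega⟩).toNat + 1) ×ˢ
              Finset.range ((ν ⟨n - 1, by omega⟩ - μ ⟨n - 1, by omega⟩).toNat + 1),
          if p.1 + 2 * p.2 = (ν ⟨n - 1, by omega⟩ - μ ⟨n - 1, by omega⟩).toNat then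
            ∑ᶠ lam ∈ {lam : Fin (n - 1) → ℚ | DominantD lam ∧ ∀ i, ∃ z : ℤ, lam i = z},
              (dPieri (restrict1 fun i => (ν i : ℚ)) lam p.1 : ℤ) •
                KD (n - 1) lam (restrict1 fun i => (μ i : ℚ))
          else 0 := by
  have hnonneg : 0 ≤ ν ⟨n - 2, by omega⟩ := Int.cast_nonneg_iff.1 <|
    (abs_nonneg _).trans (hν.2.1 (by omega) ⟨n - 2, by omega⟩ (Nat.sub_pos_of_lt hn))
  exact KD_top_row_reduction_general n (by omega) ν μ hν ((abs_of_nonneg hnonneg).trans_le h1) h2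
end

section
/- Let X be one of the types B, C, D (with n ≥ 1 for X = B, C and n ≥ 3 for X = D). Let μ = (μ_n,…,μ_1) ∈ ℤ^n with μ_n ≥ … ≥ μ_1 ≥ 0, let r ∈ ℕ with r ≥ |μ| = Σ_{i=1}^n μ_i, and set l = r − |μ| and h_n(μ) = Σ_{i=1}^n (n−i)·μ_i. Then K^{X_n}_{(r,0,…,0),μ}(q) = q^{h_n(μ)} · K^{X_n}_{(l,0,…,0),0}(q), where (r,0,…,0) denotes the dominant weight whose e_n-coordinate is r and whose other coordinates are 0, and 0 denotes the zero weight. -/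
open scoped BigOperators

/-!
The Kostka–Foulkes polynomials of the row shapes `(N, 0, …, 0)` are collected in a generating series
`row_μ(z)`, and the shift formula `row_μ(z) = z^|μ| q^h(μ) row_0(z)` is proved by induction on the
rank, alternating between two identities.

* Peeling off the last coordinate: in `K_{(N,0,…,0), (μ,b)}` only the Weyl group elements fixing
  `e_n` contribute, and the roots `e_n ± e_i` translate the remaining weight by `∓e_i`. Hence, up to
  an invertible factor depending only on the type, `row_{(μ,b)}(z) = z^b pieri_μ(q z)`, where
  `pieri_μ(z)` is the generating series of all iterated translates of `K_{λ,μ}` at `λ = 0` by the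
  vectors `±e_i` of the lower rank.
* Collapsing translates: `λ + ρ ↦ K_{λ,μ}` is alternating under the Weyl group, so the translates
  cancel against each other until only those along `e_n` remain, and
  `row_μ(z) = τ(z) pieri_μ(z)` with `τ = 1 + z`, `1`, `1 - z^2` in types `B`, `C`, `D`.

Substituting `q z` for `z` multiplies the monomial `z^|μ|` by `q^|μ|`, and these powers accumulate
to `q^h(μ)`.
-/

noncomputable section

namespace RowShape

open Finset PowerSeries

section ShiftSeries

variable {ι κ V W R : Type*} [DecidableEq ι] [DecidableEq κ] [AddCommGroup V] [AddCommGroup W]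
  [CommRing R]

/-- The generating series `∏_{i ∈ S} (1 - z T_{a i})⁻¹ f`, evaluated at `v`, where `T_a` is the
translation operator `(T_a f) v = f (v - a)` and `z` is the power series variable. -/
def shiftSeries (S : Finset ι) (a : ι → V) (f : V → R) (v : V) : R⟦X⟧ :=
  PowerSeries.mk fun N => ∑ m ∈ S.piAntidiag N, f (v - ∑ i ∈ S, m i • a i)

lemma shiftSeries_empty (a : ι → V) (f : V → R) (v : V) : shiftSeries ∅ a f v = C (f v) := by
  ext N
  rcases eq_or_ne N 0 with rfl | hN <;> simp [shiftSeries, coeff_C, *]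

lemma coeff_shiftSeries_insert {S : Finset ι} {i : ι} (hi : i ∉ S) (a : ι → V) (f : V → R)
    (v : V) (N : ℕ) :
    coeff N (shiftSeries (insert i S) a f v) =
      ∑ p ∈ antidiagonal N, coeff p.2 (shiftSeries S a f (v - p.1 • a i)) := by
  simp only [shiftSeries, coeff_mk]
  rw [← cons_eq_insert i S hi, piAntidiag_cons, sum_disjiUnion]
  refine sum_congr rfl fun p _ => ?_
  rw [sum_map]
  refine sum_congr rfl fun m hm => congrArg f ?_
  have hmi : m i = 0 := by
    by_contra h
    exact hi ((mem_piAntidiag.mp hm).2 i h)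
  have hS : ∑ j ∈ S, (addRightEmbedding (fun t => if t = i then p.1 else 0) m) j • a j =
      ∑ j ∈ S, m j • a j :=
    sum_congr rfl fun j hj => by simp [ne_of_mem_of_not_mem hj hi]
  rw [sum_cons, hS, sub_add_eq_sub_sub]
  simp [hmi]

lemma coeff_mul_shiftSeries_insert (c : R⟦X⟧) {S : Finset ι} {i : ι} (hi : i ∉ S) (a : ι → V)
    (f : V → R) (v : V) (N : ℕ) :
    coeff N (c * shiftSeries (insert i S) a f v) =
      ∑ p ∈ antidiagonal N, coeff p.2 (c * shiftSeries S a f (v - p.1 • a i)) := by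
  simp only [coeff_mul, coeff_shiftSeries_insert hi, mul_sum]
  rw [sum_sigma', sum_sigma']
  refine sum_nbij' (fun x => ⟨(x.2.1, x.1.1 + x.2.2), (x.1.1, x.2.2)⟩)
    (fun x => ⟨(x.2.1, x.1.1 + x.2.2), (x.1.1, x.2.2)⟩) ?_ ?_ ?_ ?_ ?_ <;>
  · rintro ⟨⟨_, _⟩, ⟨_, _⟩⟩
    simp only [mem_sigma, HasAntidiagonal.mem_antidiagonal, Sigma.mk.injEq, Prod.mk.injEq,
      heq_eq_eq]
    grind

lemma shiftSeries_insert {S : Finset ι} {i : ι} (hi : i ∉ S) (a : ι → V) (f : V → R) (v : V) :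
    shiftSeries (insert i S) a f v =
      shiftSeries S a f v + X * shiftSeries (insert i S) a f (v - a i) := by
  ext N
  cases N with
  | zero => simp [coeff_shiftSeries_insert hi]
  | succ N =>
    rw [map_add, coeff_succ_X_mul, coeff_shiftSeries_insert hi, coeff_shiftSeries_insert hi,
      Nat.sum_antidiagonal_succ]
    simp only [zero_smul, sub_zero, succ_nsmul', sub_add_eq_sub_sub]

lemma shiftSeries_map (e : ι ↪ κ) (S : Finset ι) (a : κ → V) (f : V → R) (v : V) :
    shiftSeries (S.map e) a f v = shiftSeries S (a ∘ e) f v := by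
  induction S using Finset.induction_on generalizing v with
  | empty => simp [shiftSeries_empty]
  | insert i S hi ih =>
    ext N
    rw [map_insert, coeff_shiftSeries_insert (by simpa using hi), coeff_shiftSeries_insert hi]
    simp only [ih, Function.comp_apply]

lemma shiftSeries_comp (φ : V →+ W) (w : W) (S : Finset ι) (a : ι → V) (f : W → R) (v : V) :
    shiftSeries S a (fun v => f (φ v - w)) v = shiftSeries S (φ ∘ a) f (φ v - w) := by
  simp [shiftSeries, sub_right_comm]

lemma shiftSeries_sum_zsmul {J : Type*} (T : Finset J) (c : J → ℤ) (f : J → V → R)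
    (S : Finset ι) (a : ι → V) (v : V) :
    shiftSeries S a (fun v => ∑ j ∈ T, c j • f j v) v = ∑ j ∈ T, c j • shiftSeries S a (f j) v := by
  ext N
  simp only [shiftSeries, coeff_mk, map_sum, map_zsmul, smul_sum]
  exact sum_comm

lemma eq_of_shift_recurrence {c : R} {a : V} {F₀ F G : V → R⟦X⟧}
    (hF : ∀ v, F v = F₀ v + C c * X * F (v - a)) (hG : ∀ v, G v = F₀ v + C c * X * G (v - a)) :
    F = G := by
  suffices hcoeff : ∀ N v, coeff N (F v) = coeff N (G v) from
    funext fun v => PowerSeries.ext fun N => hcoeff N v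
  intro N
  induction N with
  | zero => intro v; rw [hF, hG]; simp [mul_assoc]
  | succ N ih => intro v; rw [hF, hG]; simp [mul_assoc, coeff_succ_X_mul, ih]

end ShiftSeries

section KostantQ

variable {n : ℕ}

lemma kostantQ_eq_shiftSeries (R : Finset (Fin n → ℚ)) (β : Fin n → ℚ) :
    kostantQ R β = shiftSeries R id (Pi.single 0 1) β := by
  ext k
  rw [kostantQ, shiftSeries, coeff_mk, coeff_mk]
  simp only [Pi.single_apply, sub_eq_zero, sum_boole, id_eq]
  congr 1
  rw [← Fintype.card_coe, ← Nat.card_eq_fintype_card]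
  refine Nat.card_congr
    { toFun := fun m => ⟨fun α => if h : α ∈ R then m.1 ⟨α, h⟩ else 0, ?_⟩
      invFun := fun m => ⟨fun α => m.1 α.1, ?_⟩
      left_inv := fun m => by ext; simp
      right_inv := fun m => ?_ }
  · obtain ⟨m, hk, hβ⟩ := m
    simp only [mem_filter, mem_piAntidiag]
    refine ⟨⟨?_, fun i hi => by_contra fun h => by simp [h] at hi⟩, ?_⟩
    · rw [← sum_attach]; simpa using hk
    · rw [← sum_attach, ← hβ]; simp [← Nat.cast_smul_eq_nsmul ℚ]
  · obtain ⟨⟨hk, -⟩, hβ⟩ := by simpa only [mem_filter, mem_piAntidiag] using m.2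
    refine ⟨(sum_attach R fun α => m.1 α).trans hk, ?_⟩
    simp only [Nat.cast_smul_eq_nsmul, hβ]
    exact sum_attach R fun α => m.1 α • α
  · have hm := (mem_piAntidiag.mp (mem_filter.mp m.2).1).2
    ext α
    by_cases h : α ∈ R
    · simp [h]
    · simpa [h] using (of_not_not fun h' => h (hm α (Ne.symm h')) : 0 = m.1 α)

lemma kostantQ_insert {R : Finset (Fin n → ℚ)} {α : Fin n → ℚ} (hα : α ∉ R) (β : Fin n → ℚ) :
    kostantQ (insert α R) β = kostantQ R β + X * kostantQ (insert α R) (β - α) := by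
  simpa only [kostantQ_eq_shiftSeries, id_eq] using shiftSeries_insert hα id (Pi.single 0 1) β

lemma kostantQ_eq_zero {R : Finset (Fin n → ℚ)} (l : (Fin n → ℚ) →ₗ[ℚ] ℚ)
    (hl : ∀ α ∈ R, 0 ≤ l α) {β : Fin n → ℚ} (hβ : l β < 0) : kostantQ R β = 0 := by
  rw [kostantQ_eq_shiftSeries]
  ext k
  rw [shiftSeries, coeff_mk, map_zero]
  refine sum_eq_zero fun m _ => Pi.single_eq_of_ne (fun h => hβ.not_ge ?_) _
  rw [sub_eq_zero.mp h, map_sum]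
  exact sum_nonneg fun α hα => by simpa only [id_eq, map_nsmul] using nsmul_nonneg (hl α hα) (m α)

end KostantQ

section AppendLast

variable {n : ℕ} {ι : Type*} [DecidableEq ι]

/-- The weight `β` extended by a last coordinate `x`; this is `Fin.snoc` for non-dependent
families. -/
def appendLast (β : Fin n → ℚ) (x : ℚ) : Fin (n + 1) → ℚ := Fin.snoc (α := fun _ => ℚ) β x

@[simp]
lemma appendLast_castSucc (β : Fin n → ℚ) (x : ℚ) (i : Fin n) :
    appendLast β x i.castSucc = β i := by
  simp [appendLast]

@[simp]
lemma appendLast_last (β : Fin n → ℚ) (x : ℚ) : appendLast β x (Fin.last n) = x := by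
  simp [appendLast]

lemma appendLast_inj {β γ : Fin n → ℚ} {x y : ℚ} :
    appendLast β x = appendLast γ y ↔ β = γ ∧ x = y := by
  simp [appendLast, Fin.snoc_inj]

lemma eq_appendLast {v : Fin (n + 1) → ℚ} {β : Fin n → ℚ} {x : ℚ}
    (hβ : ∀ i : Fin n, v i.castSucc = β i) (hx : v (Fin.last n) = x) : v = appendLast β x := by
  ext i
  cases i using Fin.lastCases <;> simp [hβ, hx]

lemma appendLast_sub (β γ : Fin n → ℚ) (x y : ℚ) :
    appendLast β x - appendLast γ y = appendLast (β - γ) (x - y) :=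
  eq_appendLast (by simp) (by simp)

/-- The inclusion of weights of rank `n` as the weights of rank `n + 1` with last coordinate `0`. -/
def appendZero (n : ℕ) : (Fin n → ℚ) →+ (Fin (n + 1) → ℚ) where
  toFun β := appendLast β 0
  map_zero' := (eq_appendLast (by simp) (by simp)).symm
  map_add' β γ := (eq_appendLast (by simp) (by simp)).symm

lemma appendZero_injective : Function.Injective (appendZero n) :=
  fun _ _ h => (appendLast_inj.mp h).1

lemma kostantQ_appendLast_of_neg {R : Finset (Fin (n + 1) → ℚ)}
    (hR : ∀ α ∈ R, 0 ≤ α (Fin.last n)) (β : Fin n → ℚ) {x : ℚ} (hx : x < 0) :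
    kostantQ R (appendLast β x) = 0 :=
  kostantQ_eq_zero (LinearMap.proj (Fin.last n)) hR (by simpa using hx)

lemma kostantQ_image_appendZero (R : Finset (Fin n → ℚ)) (β : Fin n → ℚ) (x : ℚ) :
    kostantQ (R.image (appendZero n)) (appendLast β x) = if x = 0 then kostantQ R β else 0 := by
  have hβ : appendLast β x = appendZero n β - appendLast 0 (-x) := by
    simp [appendZero, appendLast_sub]
  have hδ (v : Fin n → ℚ) :
      (Pi.single 0 1 : (Fin (n + 1) → ℚ) → ℤ) (appendZero n v - appendLast 0 (-x)) =
        if x = 0 then (Pi.single 0 1 : (Fin n → ℚ) → ℤ) v else 0 := by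
    have hv : appendLast v x = 0 ↔ v = 0 ∧ x = 0 := by
      rw [← map_zero (appendZero n)]; exact appendLast_inj
    simp only [appendZero, AddMonoidHom.coe_mk, ZeroHom.coe_mk, appendLast_sub, sub_zero,
      sub_neg_eq_add, zero_add, Pi.single_apply, hv]
    split_ifs <;> simp_all
  have himage : R.image (appendZero n) = R.map ⟨appendZero n, appendZero_injective⟩ := by
    ext; simp
  rw [kostantQ_eq_shiftSeries, himage, shiftSeries_map, hβ]
  refine (shiftSeries_comp (appendZero n) _ R id _ β).symm.trans ?_
  simp only [hδ]
  split_ifs with hx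
  · rw [kostantQ_eq_shiftSeries]
  · ext; simp [shiftSeries]

/-- The generating series `∑_{N ≥ 0} P_q(β, N) z^N` of the partition function along the last
coordinate, with `q` the inner and `z` the outer variable. -/
def lastSeries (R : Finset (Fin (n + 1) → ℚ)) (β : Fin n → ℚ) : ℤ⟦X⟧⟦X⟧ :=
  PowerSeries.mk fun N => kostantQ R (appendLast β N)

lemma lastSeries_insert {R : Finset (Fin (n + 1) → ℚ)} (hR : ∀ α ∈ R, 0 ≤ α (Fin.last n))
    {α : Fin n → ℚ} {k : ℕ} (hα : appendLast α k ∉ R) (β : Fin n → ℚ) :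
    lastSeries (insert (appendLast α k) R) β =
      lastSeries R β + C X * X ^ k * lastSeries (insert (appendLast α k) R) (β - α) := by
  ext1 N
  rw [map_add, mul_assoc, coeff_C_mul, coeff_X_pow_mul']
  simp only [lastSeries, coeff_mk]
  rw [kostantQ_insert hα, appendLast_sub]
  split_ifs with hN
  · rw [Nat.cast_sub hN]
  · have hneg : (N : ℚ) - k < 0 := sub_neg_of_lt (by exact_mod_cast not_le.mp hN)
    rw [kostantQ_appendLast_of_neg (forall_mem_insert _ _ _ |>.mpr ⟨by simp, hR⟩) _ hneg]

lemma one_sub_mul_lastSeries_insert {R : Finset (Fin (n + 1) → ℚ)}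
    (hR : ∀ α ∈ R, 0 ≤ α (Fin.last n)) {k : ℕ} (hk : appendLast 0 k ∉ R) (β : Fin n → ℚ) :
    (1 - C X * X ^ k) * lastSeries (insert (appendLast 0 k) R) β = lastSeries R β := by
  have h := lastSeries_insert hR hk β
  rw [sub_zero] at h
  linear_combination h

lemma lastSeries_image_union (R : Finset (Fin n → ℚ)) {a : ι → Fin n → ℚ}
    (ha : Function.Injective a) (S : Finset ι) :
    lastSeries (S.image (fun i => appendLast (a i) 1) ∪ R.image (appendZero n)) =
      fun β => rescale X (shiftSeries S a (kostantQ R) β) := by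
  induction S using Finset.induction_on with
  | empty =>
    ext β : 2
    simp only [image_empty, empty_union, lastSeries, coeff_mk, shiftSeries_empty, coeff_rescale,
      coeff_C, kostantQ_image_appendZero, Nat.cast_eq_zero]
    split_ifs with hN <;> simp [hN]
  | insert i S hi ih =>
    have hnonneg : ∀ α ∈ S.image (fun i => appendLast (a i) 1) ∪ R.image (appendZero n),
        0 ≤ α (Fin.last n) := by
      simp only [mem_union, mem_image]
      rintro _ (⟨i, -, rfl⟩ | ⟨β, -, rfl⟩) <;> simp [appendZero]
    have hmem : appendLast (a i) (1 : ℕ) ∉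
        S.image (fun i => appendLast (a i) 1) ∪ R.image (appendZero n) := by
      simp [appendZero, appendLast_inj, ha.eq_iff, hi]
    refine eq_of_shift_recurrence (c := X) (a := a i) (fun β => ?_) (fun β => ?_)
      (F₀ := fun β => rescale X (shiftSeries S a (kostantQ R) β))
    · simpa [image_insert, insert_union, ih] using lastSeries_insert hnonneg hmem β
    · rw [shiftSeries_insert hi]
      simp [rescale_X]

end AppendLast

section ClassicalTypes

/-- The types of the classical root systems other than type `A`. -/
inductive ClassicalType
  | B | C | D

/-- The positive roots of type `t` and rank `n`. -/
def ClassicalType.roots : ClassicalType → (n : ℕ) → Finset (Fin n → ℚ)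
  | B => rootsB
  | C => rootsC
  | D => rootsD

/-- The first coordinate of the half-sum of positive roots. -/
def ClassicalType.shift : ClassicalType → ℚ
  | B => 1 / 2
  | C => 1
  | D => 0

lemma ClassicalType.shift_nonneg (t : ClassicalType) : 0 ≤ t.shift := by
  cases t <;> simp [ClassicalType.shift]

/-- The half-sum of the positive roots of type `t` and rank `n`. -/
def ClassicalType.rho (t : ClassicalType) (n : ℕ) : Fin n → ℚ := fun i => i + t.shift

/-- The inverse of the contribution of the roots `e_n`, resp. `2 e_n`, to the generating series of
the partition function along the last coordinate. -/
def ClassicalType.lastFactor : ClassicalType → ℤ⟦X⟧⟦X⟧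
  | B => 1 - PowerSeries.C X * X
  | C => 1 - PowerSeries.C X * X ^ 2
  | D => 1

lemma ClassicalType.lastFactor_ne_zero (t : ClassicalType) : t.lastFactor ≠ 0 := by
  intro h
  have := congrArg constantCoeff h
  cases t <;> simp [lastFactor] at this

/-- The vectors `e_i = signedUnit (i, false)` and `-e_i = signedUnit (i, true)`, the weights of the
vector representation. -/
def signedUnit {n : ℕ} (j : Fin n × Bool) : Fin n → ℚ := Pi.single j.1 (if j.2 then -1 else 1)

lemma signedUnit_injective {n : ℕ} : Function.Injective (signedUnit (n := n)) := by
  rintro ⟨i, b⟩ ⟨j, c⟩ h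
  have hij := congrFun h i
  by_cases hne : i = j
  · subst hne
    cases b <;> cases c <;> simp [signedUnit] at hij ⊢ <;> norm_num at hij
  · cases b <;> simp [signedUnit, hne] at hij

lemma signedUnit_ne_zero {n : ℕ} (j : Fin n × Bool) : signedUnit j ≠ 0 := by
  rw [signedUnit, Ne, Pi.single_eq_zero_iff]
  split_ifs <;> norm_num

lemma mem_rootsD {n : ℕ} {α : Fin n → ℚ} : α ∈ rootsD n ↔
    ∃ i j : Fin n, j < i ∧ ∃ b, α = Pi.single i 1 + signedUnit (j, b) := by
  simp only [rootsD, mem_union, mem_image, mem_filter, mem_univ, true_and, Prod.exists,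
    Bool.exists_bool, signedUnit, Pi.single_neg, ← sub_eq_add_neg, if_true, Bool.false_eq_true,
    if_false]
  grind

lemma single_last {n : ℕ} (x : ℚ) : (Pi.single (Fin.last n) x : Fin (n + 1) → ℚ) = appendLast 0 x :=
  eq_appendLast (fun i => Pi.single_eq_of_ne i.castSucc_ne_last _) (by simp)

lemma single_castSucc {n : ℕ} (i : Fin n) (x : ℚ) :
    (Pi.single i.castSucc x : Fin (n + 1) → ℚ) = appendZero n (Pi.single i x) :=
  eq_appendLast (fun j => by simp [Pi.single_apply])
    (Pi.single_eq_of_ne i.castSucc_ne_last.symm _)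

lemma single_last_add_appendZero {n : ℕ} (β : Fin n → ℚ) (x : ℚ) :
    Pi.single (Fin.last n) x + appendZero n β = appendLast β x :=
  eq_appendLast (by simp [appendZero, Fin.castSucc_ne_last])
    (by simp [appendZero])

lemma signedUnit_castSucc {n : ℕ} (j : Fin n) (b : Bool) :
    signedUnit (j.castSucc, b) = appendZero n (signedUnit (j, b)) :=
  single_castSucc j _

lemma rootsD_succ (n : ℕ) : rootsD (n + 1) =
    univ.image (fun j => appendLast (signedUnit j) 1) ∪ (rootsD n).image (appendZero n) := by
  ext α
  simp only [mem_union, mem_image, mem_univ, true_and, Prod.exists, mem_rootsD,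
    Fin.exists_iff_castSucc, signedUnit_castSucc, single_last_add_appendZero, single_castSucc,
    ← map_add, Fin.castSucc_lt_last, Fin.castSucc_lt_castSucc_iff, lt_irrefl,
    (Fin.castSucc_lt_last _).not_gt]
  grind

lemma rootsD_union_succ (n : ℕ) (x : ℚ) :
    rootsD (n + 1) ∪ univ.image (fun i => Pi.single i x) =
      insert (appendLast 0 x) (univ.image (fun j => appendLast (signedUnit j) 1) ∪
        (rootsD n ∪ univ.image (fun i => Pi.single i x)).image (appendZero n)) := by
  have hsingle : univ.image (fun i : Fin (n + 1) => (Pi.single i x : Fin (n + 1) → ℚ)) =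
      insert (appendLast 0 x) ((univ.image fun i => Pi.single i x).image (appendZero n)) := by
    ext α
    simp only [mem_image, mem_univ, true_and, mem_insert, exists_exists_eq_and,
      ← single_castSucc, ← single_last]
    constructor
    · rintro ⟨i, rfl⟩
      cases i using Fin.lastCases <;> simp
    · rintro (rfl | ⟨i, rfl⟩) <;> exact ⟨_, rfl⟩
  rw [hsingle, rootsD_succ, image_union, union_insert, union_assoc]

lemma lastFactor_mul_lastSeries (t : ClassicalType) {n : ℕ} (β : Fin n → ℚ) :
    t.lastFactor * lastSeries (t.roots (n + 1)) β =
      rescale X (shiftSeries univ signedUnit (kostantQ (t.roots n)) β) := by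
  rw [← congrFun (lastSeries_image_union (t.roots n) signedUnit_injective univ) β]
  set R := univ.image (fun j => appendLast (signedUnit j) 1) ∪
    (t.roots n).image (appendZero n) with hR
  have hnonneg : ∀ α ∈ R, 0 ≤ α (Fin.last n) := by
    simp only [hR, mem_union, mem_image]
    rintro _ (⟨i, -, rfl⟩ | ⟨β, -, rfl⟩) <;> simp [appendZero]
  have hmem {k : ℕ} (hk : k ≠ 0) : appendLast 0 k ∉ R := by
    have hk0 : (0 : ℚ) ≠ k := by exact_mod_cast hk.symm
    simp [hR, appendZero, appendLast_inj, signedUnit_ne_zero, hk0]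
  cases t with
  | B =>
    have hroots : rootsB (n + 1) = insert (appendLast 0 (1 : ℕ)) R := by
      rw [Nat.cast_one]; exact rootsD_union_succ n 1
    simpa [ClassicalType.lastFactor, ClassicalType.roots, hroots] using
      one_sub_mul_lastSeries_insert hnonneg (hmem one_ne_zero) β
  | C =>
    have hroots : rootsC (n + 1) = insert (appendLast 0 (2 : ℕ)) R := by
      rw [Nat.cast_two]; exact rootsD_union_succ n 2
    simpa [ClassicalType.lastFactor, ClassicalType.roots, hroots] using
      one_sub_mul_lastSeries_insert hnonneg (hmem two_ne_zero) β
  | D => simp [ClassicalType.lastFactor, ClassicalType.roots, hR, rootsD_succ]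

end ClassicalTypes

section WeylGroup

variable {n : ℕ}

/-- The product of the signs of the signed permutation `(σ, ε)`. -/
def signProd (ε : Fin n → Bool) : ℤ := ∏ i, if ε i then -1 else 1

/-- The determinant on the Weyl group of type `t`, extended by zero to all signed permutations. -/
def weylDet : ClassicalType → Equiv.Perm (Fin n) → (Fin n → Bool) → ℤ
  | .D, σ, ε => if signProd ε = 1 then wDet σ ε else 0
  | _, σ, ε => wDet σ ε

/-- The signs of the composite of `(σ, ε)` and any `(τ, δ)`, whose permutation is `σ * τ`. -/
def mulSigns (σ : Equiv.Perm (Fin n)) (ε δ : Fin n → Bool) : Fin n → Bool :=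
  fun i => xor (ε i) (δ (σ⁻¹ i))

lemma ite_mulSigns {R : Type*} [Ring R] (σ : Equiv.Perm (Fin n)) (ε δ : Fin n → Bool) (i : Fin n) :
    (if mulSigns σ ε δ i then (-1 : R) else 1) =
      (if ε i then -1 else 1) * (if δ (σ⁻¹ i) then -1 else 1) := by
  unfold mulSigns
  cases ε i <;> cases δ (σ⁻¹ i) <;> simp

lemma signProd_mulSigns (σ : Equiv.Perm (Fin n)) (ε δ : Fin n → Bool) :
    signProd (mulSigns σ ε δ) = signProd ε * signProd δ := by
  simp only [signProd, ite_mulSigns, prod_mul_distrib]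
  rw [Equiv.prod_comp σ⁻¹ fun i => if δ i then (-1 : ℤ) else 1]

lemma wDet_mul (σ τ : Equiv.Perm (Fin n)) (ε δ : Fin n → Bool) :
    wDet (σ * τ) (mulSigns σ ε δ) = wDet σ ε * wDet τ δ := by
  have h := signProd_mulSigns σ ε δ
  simp only [signProd] at h
  rw [wDet, wDet, wDet, h, Equiv.Perm.sign_mul, Units.val_mul]
  ring

lemma weylDet_mul {t : ClassicalType} (σ τ : Equiv.Perm (Fin n)) (ε : Fin n → Bool)
    {δ : Fin n → Bool} (hδ : t = .D → signProd δ = 1) :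
    weylDet t (σ * τ) (mulSigns σ ε δ) = weylDet t σ ε * wDet τ δ := by
  cases t with
  | B | C => exact wDet_mul σ τ ε δ
  | D => simp [weylDet, signProd_mulSigns, hδ rfl, wDet_mul]

lemma wDet_mul_self (σ : Equiv.Perm (Fin n)) (ε : Fin n → Bool) : wDet σ ε * wDet σ ε = 1 := by
  rw [wDet, mul_mul_mul_comm, ← prod_mul_distrib, ← Units.val_mul, Int.units_mul_self,
    Units.val_one, one_mul]
  exact prod_eq_one fun i _ => by cases ε i <;> simp

lemma wAct_wAct (σ τ : Equiv.Perm (Fin n)) (ε δ : Fin n → Bool) (v : Fin n → ℚ) :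
    wAct σ ε (wAct τ δ v) = wAct (σ * τ) (mulSigns σ ε δ) v := by
  ext i
  simp only [wAct, ite_mulSigns, mul_inv_rev, Equiv.Perm.mul_apply, mul_assoc]

/-- The action of a signed permutation on weights as an additive map. -/
def wActHom (σ : Equiv.Perm (Fin n)) (ε : Fin n → Bool) : (Fin n → ℚ) →+ (Fin n → ℚ) where
  toFun := wAct σ ε
  map_zero' := by ext; simp [wAct]
  map_add' v w := by ext; simp [wAct, mul_add]

/-- A function on weights is alternating of type `t` if the Weyl group of type `t` acts on it by the
determinant. -/
def IsAlternating {M : Type*} [AddCommGroup M] (t : ClassicalType) (A : (Fin n → ℚ) → M) : Prop :=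
  ∀ (σ : Equiv.Perm (Fin n)) (ε : Fin n → Bool), (t = .D → signProd ε = 1) →
    ∀ v, A (wAct σ ε v) = wDet σ ε • A v

/-- The alternating sum `∑_σ det(σ) P_q(σ v - (μ + ρ))` over the Weyl group of type `t`. At
`v = λ + ρ` it is the Kostka–Foulkes polynomial `K_{λ, μ}`. -/
def altKostant (t : ClassicalType) (μ v : Fin n → ℚ) : ℤ⟦X⟧ :=
  ∑ w : Equiv.Perm (Fin n) × (Fin n → Bool),
    weylDet t w.1 w.2 • kostantQ (t.roots n) (wAct w.1 w.2 v - (μ + t.rho n))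

/-- Right multiplication by `(τ, δ)` on signed permutations. -/
def mulRightSigned (τ : Equiv.Perm (Fin n)) (δ : Fin n → Bool) :
    Equiv.Perm (Equiv.Perm (Fin n) × (Fin n → Bool)) where
  toFun w := (w.1 * τ, mulSigns w.1 w.2 δ)
  invFun w := (w.1 * τ⁻¹, mulSigns (w.1 * τ⁻¹) w.2 δ)
  left_inv w := by ext <;> simp [mulSigns]
  right_inv w := by ext <;> simp [mulSigns]

lemma isAlternating_altKostant (t : ClassicalType) (μ : Fin n → ℚ) :
    IsAlternating t (altKostant t μ) := by
  intro τ δ hδ v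
  rw [altKostant, altKostant, smul_sum]
  refine .trans ?_ (Equiv.sum_comp (mulRightSigned τ δ) _)
  refine sum_congr rfl fun w _ => ?_
  simp only [mulRightSigned, Equiv.coe_fn_mk, wAct_wAct, weylDet_mul _ _ _ hδ, smul_smul]
  rw [mul_left_comm, wDet_mul_self, mul_one]

/-- The permutation of the index set of `signedUnit` induced by a signed permutation. -/
def signedPerm (σ : Equiv.Perm (Fin n)) (ε : Fin n → Bool) : Equiv.Perm (Fin n × Bool) where
  toFun j := (σ j.1, xor j.2 (ε (σ j.1)))
  invFun j := (σ⁻¹ j.1, xor j.2 (ε j.1))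
  left_inv j := by simp
  right_inv j := by simp

lemma wAct_signedUnit (σ : Equiv.Perm (Fin n)) (ε : Fin n → Bool) (j : Fin n × Bool) :
    wAct σ ε (signedUnit j) = signedUnit (signedPerm σ ε j) := by
  obtain ⟨k, b⟩ := j
  ext i
  by_cases h : i = σ k
  · subst h
    cases b <;> cases hε : ε (σ k) <;> simp [wAct, signedUnit, signedPerm, hε]
  · have hk : σ⁻¹ i ≠ k := fun hk => h (Equiv.Perm.inv_eq_iff_eq.mp hk)
    simp only [wAct, signedUnit, signedPerm, Equiv.coe_fn_mk, Pi.single_eq_of_ne hk,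
      Pi.single_eq_of_ne h, mul_zero]

lemma shiftSeries_signedUnit_wAct {R : Type*} [CommRing R] (S : Finset (Fin n × Bool))
    (f : (Fin n → ℚ) → R) (σ : Equiv.Perm (Fin n)) (ε : Fin n → Bool) (w v : Fin n → ℚ) :
    shiftSeries S signedUnit (fun v => f (wAct σ ε v - w)) v =
      shiftSeries (S.map (signedPerm σ ε).toEmbedding) signedUnit f (wAct σ ε v - w) := by
  refine (shiftSeries_comp (wActHom σ ε) w S signedUnit f v).trans ?_
  rw [shiftSeries_map]
  congr 1
  exact funext (wAct_signedUnit σ ε)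

end WeylGroup

section Alternating

variable {n : ℕ} {R : Type*} [CommRing R] {A : (Fin n → ℚ) → R}

instance [IsAddTorsionFree R] : IsAddTorsionFree R⟦X⟧ :=
  inferInstanceAs (IsAddTorsionFree ((Unit →₀ ℕ) → R))

lemma sum_antidiagonal_of_antisymm {M : Type*} [AddCommGroup M] [IsAddTorsionFree M]
    {f : ℕ × ℕ → M} (hf : ∀ b c, f (b, c + 1) = -f (c, b + 1)) (N : ℕ) :
    ∑ p ∈ antidiagonal N, f p = f (N, 0) := by
  cases N with
  | zero => simp
  | succ N =>
    rw [Nat.sum_antidiagonal_succ', add_eq_left, ← self_eq_neg, ← sum_neg_distrib]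
    refine .trans (sum_congr rfl fun p _ => hf p.1 p.2) ?_
    exact Nat.sum_antidiagonal_swap (f := fun p => -f (p.1, p.2 + 1))

lemma wAct_swap (i j : Fin n) (v : Fin n → ℚ) :
    wAct (Equiv.swap i j) (fun _ => false) v = v ∘ Equiv.swap i j := by
  ext k
  simp [wAct]

lemma wAct_one_neg (i : Fin n) (v : Fin n → ℚ) :
    wAct 1 (fun k => decide (k = i)) v = Function.update v i (-v i) := by
  ext k
  by_cases h : k = i
  · subst h; simp [wAct]
  · simp [wAct, h]

lemma IsAlternating.comp_swap {t : ClassicalType} (hA : IsAlternating t A) {i j : Fin n}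
    (hij : i ≠ j) (v : Fin n → ℚ) : A (v ∘ Equiv.swap i j) = -A v := by
  rw [← wAct_swap, hA _ _ (fun _ => by simp [signProd])]
  simp [wDet, Equiv.Perm.sign_swap hij]

lemma IsAlternating.update_neg {t : ClassicalType} (hA : IsAlternating t A) (ht : t ≠ .D)
    (i : Fin n) (v : Fin n → ℚ) : A (Function.update v i (-v i)) = -A v := by
  rw [← wAct_one_neg, hA _ _ (fun h => absurd h ht)]
  simp [wDet, prod_ite_eq']

lemma IsAlternating.update_neg_update_neg {t : ClassicalType} (hA : IsAlternating t A)
    {i j : Fin n} (hij : i ≠ j) (v : Fin n → ℚ) :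
    A (Function.update (Function.update v i (-v i)) j (-v j)) = A v := by
  have hprod : ∏ k, (if decide (k = i ∨ k = j) = true then (-1 : ℤ) else 1) = 1 := by
    have hfilter : (univ.filter fun k => k = i ∨ k = j) = {i, j} := by ext; simp
    simp [prod_ite, hfilter, card_pair hij]
  have h := hA 1 (fun k => decide (k = i ∨ k = j)) (fun _ => hprod) v
  rw [wDet, hprod, Equiv.Perm.sign_one, Units.val_one, one_mul, one_smul] at h
  rw [← h]
  congr 1
  ext k
  by_cases hi : k = i <;> by_cases hj : k = j <;> simp_all [wAct]

lemma IsAlternating.add_single_antisymm {t : ClassicalType} (hA : IsAlternating t A) {i j : Fin n}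
    (hij : i ≠ j) {v : Fin n → ℚ} (hv : v j = v i + 1) (b c : ℚ) :
    A (v + Pi.single j b + Pi.single i (c + 1)) =
      -A (v + Pi.single j c + Pi.single i (b + 1)) := by
  rw [← hA.comp_swap hij]
  congr 1
  ext k
  by_cases hi : k = i
  · subst hi; simp [hij, hij.symm, hv]; ring
  by_cases hj : k = j
  · subst hj; simp [hij, hij.symm, hv]; ring
  · simp [Equiv.swap_apply_of_ne_of_ne hi hj, hi, hj]

lemma IsAlternating.sub_single_antisymm {t : ClassicalType} (hA : IsAlternating t A) {i j : Fin n}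
    (hij : i ≠ j) {v : Fin n → ℚ} (hi : v i = 0) (hj : v j = 1) (b c : ℚ) :
    A (v + Pi.single j b - Pi.single i (c + 1)) =
      -A (v + Pi.single j c - Pi.single i (b + 1)) := by
  have hv : v j = v i + 1 := by rw [hi, hj, zero_add]
  have hreflect : v + Pi.single j b - Pi.single i (c + 1) =
      v + Pi.single j b + Pi.single i (-(c + 2) + 1) := by
    rw [sub_eq_add_neg, ← Pi.single_neg]; congr 2; ring
  rw [hreflect, hA.add_single_antisymm hij hv, ← hA.update_neg_update_neg hij]
  congr 2
  ext k
  by_cases hki : k = i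
  · subst hki; simp [hij, hi]
  by_cases hkj : k = j
  · subst hkj; simp [hij.symm, hj]; ring
  · simp [hki, hkj]

/-- The generating series of the iterated shifts of `A` by the vectors `±e_k` with `k ≤ i`. -/
def pieriUpTo (i : Fin n) (A : (Fin n → ℚ) → R) (v : Fin n → ℚ) : R⟦X⟧ :=
  shiftSeries (Iic i ×ˢ univ) signedUnit A v

lemma pieriUpTo_wAct {i : Fin n} {σ : Equiv.Perm (Fin n)} (hσ : ∀ k, σ k ≤ i ↔ k ≤ i)
    {ε : Fin n → Bool} (hA : ∀ v, A (wAct σ ε v) = -A v) (v : Fin n → ℚ) :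
    pieriUpTo i A (wAct σ ε v) = -pieriUpTo i A v := by
  have h := shiftSeries_signedUnit_wAct (Iic i ×ˢ univ) A σ ε 0 v
  have hmap : (Iic i ×ˢ univ).map (signedPerm σ ε).toEmbedding = Iic i ×ˢ univ := by
    ext j
    have hj : σ.symm j.1 ≤ i ↔ j.1 ≤ i := by simpa using (hσ (σ⁻¹ j.1)).symm
    rw [mem_map_equiv]
    simpa [signedPerm, hj] using fun _ => em' _
  simp only [sub_zero, hA, hmap] at h
  rw [pieriUpTo, ← h]
  ext N
  simp [pieriUpTo, shiftSeries]

lemma pieriUpTo_comp_swap {i j k : Fin n} (hj : j ≤ i) (hk : k ≤ i)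
    (hA : ∀ v, A (v ∘ Equiv.swap j k) = -A v) (v : Fin n → ℚ) :
    pieriUpTo i A (v ∘ Equiv.swap j k) = -pieriUpTo i A v := by
  rw [← wAct_swap]
  refine pieriUpTo_wAct (fun l => ?_) (fun v => by rw [wAct_swap, hA]) v
  rw [Equiv.swap_apply_def]
  split_ifs <;> simp_all

lemma pieriUpTo_update_neg {i j : Fin n} (hA : ∀ v, A (Function.update v j (-v j)) = -A v)
    (v : Fin n → ℚ) : pieriUpTo i A (Function.update v j (-v j)) = -pieriUpTo i A v := by
  rw [← wAct_one_neg]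
  exact pieriUpTo_wAct (fun _ => Iff.rfl) (fun v => by rw [wAct_one_neg, hA]) v

lemma signedUnit_false (i : Fin n) : signedUnit (i, false) = Pi.single i 1 := rfl

lemma signedUnit_true (i : Fin n) : signedUnit (i, true) = -Pi.single i 1 := Pi.single_neg i 1

lemma sub_nsmul_signedUnit_true (i : Fin n) (v : Fin n → ℚ) (N : ℕ) :
    v - N • signedUnit (i, true) = v + Pi.single i (N : ℚ) := by
  ext k
  by_cases h : k = i
  · subst h; simp [signedUnit]
  · simp [signedUnit, h]

lemma sub_nsmul_signedUnit_false (i : Fin n) (v : Fin n → ℚ) (N : ℕ) :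
    v - N • signedUnit (i, false) = v - Pi.single i (N : ℚ) := by
  ext k
  by_cases h : k = i
  · subst h; simp [signedUnit]
  · simp [signedUnit, h]

lemma coeff_shiftSeries_singleton {ι V : Type*} [DecidableEq ι] [AddCommGroup V] (i : ι)
    (a : ι → V) (f : V → R) (v : V) (N : ℕ) :
    coeff N (shiftSeries {i} a f v) = f (v - N • a i) := by
  rw [← insert_empty_eq, coeff_shiftSeries_insert (notMem_empty i)]
  simp only [shiftSeries_empty, coeff_C]
  rw [sum_eq_single (N, 0)] <;> grind [HasAntidiagonal.mem_antidiagonal]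

lemma pieriUpTo_zero {m : ℕ} (A : (Fin (m + 1) → ℚ) → R) (v : Fin (m + 1) → ℚ) :
    pieriUpTo 0 A v = shiftSeries {(0, true)} signedUnit A v +
      X * pieriUpTo 0 A (v - Pi.single 0 1) := by
  have hset : Iic (0 : Fin (m + 1)) ×ˢ (univ : Finset Bool) = insert (0, false) {(0, true)} := by
    ext ⟨k, b⟩; cases b <;> simp
  have h := shiftSeries_insert (i := ((0 : Fin (m + 1)), false)) (S := {(0, true)}) (by simp)
    signedUnit A v
  rwa [← hset, signedUnit_false] at h

lemma pieriUpTo_zero' {m : ℕ} (A : (Fin (m + 1) → ℚ) → R) (v : Fin (m + 1) → ℚ) :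
    pieriUpTo 0 A v = shiftSeries {(0, false)} signedUnit A v +
      X * pieriUpTo 0 A (v + Pi.single 0 1) := by
  have hset : Iic (0 : Fin (m + 1)) ×ˢ (univ : Finset Bool) = insert (0, true) {(0, false)} := by
    ext ⟨k, b⟩; cases b <;> simp
  have h := shiftSeries_insert (i := ((0 : Fin (m + 1)), true)) (S := {(0, false)}) (by simp)
    signedUnit A v
  rwa [← hset, signedUnit_true, sub_neg_eq_add] at h

lemma coeff_one_sub_sq_mul_pieriUpTo_zero {m : ℕ} (A : (Fin (m + 1) → ℚ) → R)
    (v : Fin (m + 1) → ℚ) (N : ℕ) :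
    coeff N ((1 - X ^ 2) * pieriUpTo 0 A v) =
      A (v + Pi.single 0 (N : ℚ)) + if N = 0 then 0 else A (v - Pi.single 0 (N : ℚ)) := by
  have hsplit : (1 - X ^ 2) * pieriUpTo 0 A v = shiftSeries {(0, true)} signedUnit A v +
      X * shiftSeries {(0, false)} signedUnit A (v - Pi.single 0 1) := by
    have h := pieriUpTo_zero' A (v - Pi.single 0 1)
    rw [sub_add_cancel] at h
    linear_combination pieriUpTo_zero A v + X * h
  rw [hsplit, map_add, coeff_shiftSeries_singleton, sub_nsmul_signedUnit_true]
  cases N with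
  | zero => simp
  | succ N =>
    rw [coeff_succ_X_mul, coeff_shiftSeries_singleton, sub_nsmul_signedUnit_false, sub_sub,
      ← Pi.single_add]
    simp [add_comm]

/-- The factor relating the generating series of row shapes to that of the iterated shifts by
`±e_i`. -/
def ClassicalType.tau : ClassicalType → R⟦X⟧
  | .B => 1 + X
  | .C => 1
  | .D => 1 - X ^ 2

variable [IsAddTorsionFree R]

lemma coeff_tau_mul_pieriUpTo_zero {m : ℕ} {A : (Fin (m + 1) → ℚ) → R} {t : ClassicalType}
    (ht : t ≠ .D) (hA : IsAlternating t A) {v : Fin (m + 1) → ℚ} (hv : v 0 = t.shift) (N : ℕ) :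
    coeff N (t.tau * pieriUpTo 0 A v) = A (v + Pi.single 0 (N : ℚ)) := by
  suffices t.tau * pieriUpTo 0 A v = shiftSeries {(0, true)} signedUnit A v by
    rw [this, coeff_shiftSeries_singleton, sub_nsmul_signedUnit_true]
  have hrec := pieriUpTo_zero A v
  have hneg := pieriUpTo_update_neg (i := 0) (hA.update_neg ht 0)
  cases t with
  | B =>
    have hreflect : v - Pi.single 0 1 = Function.update v 0 (-v 0) := by
      ext k
      by_cases h : k = 0
      · subst h; rw [Pi.sub_apply, hv]; norm_num [ClassicalType.shift, hv]
      · simp [h]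
    rw [hreflect, hneg] at hrec
    rw [ClassicalType.tau]
    linear_combination hrec
  | C =>
    have hzero : (v - Pi.single 0 1 : Fin (m + 1) → ℚ) 0 = 0 := by simp [hv, ClassicalType.shift]
    have hvanish := hneg (v - Pi.single 0 1)
    rw [hzero, neg_zero, Function.update_eq_self_iff.mpr hzero.symm, self_eq_neg] at hvanish
    rw [hrec, hvanish, ClassicalType.tau, one_mul, mul_zero, add_zero]
  | D => exact absurd rfl ht

/-- Only the shifts by `-e_{i+1}` survive when passing from `i` to `i + 1`: those by `e_{i+1}`
produce an alternating function at a weight with two equal coordinates. -/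
lemma coeff_mul_pieriUpTo_succ {m : ℕ} {A : (Fin (m + 1) → ℚ) → R} (i : Fin m)
    (hA : ∀ v, A (v ∘ Equiv.swap i.castSucc i.succ) = -A v) {v : Fin (m + 1) → ℚ}
    (hv : v i.succ = v i.castSucc + 1) (c : R⟦X⟧) (N : ℕ) :
    coeff N (c * pieriUpTo i.succ A v) = ∑ p ∈ antidiagonal N,
      coeff p.2 (c * pieriUpTo i.castSucc A (v + Pi.single i.succ (p.1 : ℚ))) := by
  have hset : Iic i.succ ×ˢ (univ : Finset Bool) =
      insert (i.succ, false) (insert (i.succ, true) (Iic i.castSucc ×ˢ univ)) := by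
    ext ⟨k, b⟩
    simp only [mem_product, mem_Iic, mem_univ, and_true, mem_insert, Prod.mk.injEq, Fin.ext_iff,
      Fin.le_def, Fin.val_succ, Fin.val_castSucc]
    cases b <;> simp <;> omega
  have hlast (b : Bool) : (i.succ, b) ∉ Iic i.castSucc ×ˢ (univ : Finset Bool) := by
    simp
  have hequal : (v - Pi.single i.succ 1) ∘ Equiv.swap i.castSucc i.succ =
      v - Pi.single i.succ 1 := by
    ext k
    simp only [Function.comp_apply, Equiv.swap_apply_def]
    split_ifs <;> simp_all [Fin.castSucc_lt_succ.ne]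
  have hvanish := pieriUpTo_comp_swap Fin.castSucc_lt_succ.le le_rfl hA (v - Pi.single i.succ 1)
  rw [hequal, self_eq_neg] at hvanish
  have hinsert : pieriUpTo i.succ A v =
      shiftSeries (insert (i.succ, true) (Iic i.castSucc ×ˢ univ)) signedUnit A v := by
    have hrec := shiftSeries_insert (i := (i.succ, false))
      (S := insert (i.succ, true) (Iic i.castSucc ×ˢ univ)) (by simp) signedUnit A v
    rw [← hset, signedUnit_false] at hrec
    exact hrec.trans (by rw [← pieriUpTo, hvanish, mul_zero, add_zero])
  rw [hinsert, coeff_mul_shiftSeries_insert c (hlast true)]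
  simp only [sub_nsmul_signedUnit_true, pieriUpTo]

lemma coeff_tau_mul_pieriUpTo {m : ℕ} {A : (Fin (m + 1) → ℚ) → R} {t : ClassicalType}
    (hA : IsAlternating t A) (i : Fin (m + 1)) (hi : t = .D → i ≠ 0) {v : Fin (m + 1) → ℚ}
    (hv : ∀ k ≤ i, v k = t.rho (m + 1) k) (N : ℕ) :
    coeff N (t.tau * pieriUpTo i A v) = A (v + Pi.single i (N : ℚ)) := by
  induction i using Fin.induction generalizing v N with
  | zero =>
    exact coeff_tau_mul_pieriUpTo_zero (fun ht => hi ht rfl) hA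
      ((hv 0 le_rfl).trans (by simp [ClassicalType.rho])) N
  | succ i ih =>
    have hlt : i.castSucc < i.succ := Fin.castSucc_lt_succ
    have hsucc : v i.succ = v i.castSucc + 1 := by
      rw [hv _ le_rfl, hv _ hlt.le]
      simp only [ClassicalType.rho, Fin.val_succ, Fin.val_castSucc, Nat.cast_succ]
      ring
    rw [coeff_mul_pieriUpTo_succ i (hA.comp_swap hlt.ne) hsucc]
    by_cases hbase : t = .D ∧ i.castSucc = 0
    · obtain ⟨rfl, h0⟩ := hbase
      have hv0 : v 0 = 0 :=
        (hv 0 (Fin.zero_le _)).trans (by simp [ClassicalType.rho, ClassicalType.shift])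
      rw [h0] at hsucc hlt ⊢
      simp only [ClassicalType.tau, coeff_one_sub_sq_mul_pieriUpTo_zero]
      rw [sum_antidiagonal_of_antisymm fun b c => ?_]
      · simp
      · simp only [Nat.cast_succ, Nat.succ_ne_zero, if_false]
        rw [hA.add_single_antisymm hlt.ne hsucc,
          hA.sub_single_antisymm hlt.ne hv0 (hsucc.trans (by rw [hv0, zero_add])), neg_add]
    · have hstep (b c : ℕ) :=
        ih (v := v + Pi.single i.succ (b : ℚ)) (fun ht h0 => hbase ⟨ht, h0⟩)
          (fun k hk => by simp [(hk.trans_lt hlt).ne, hv k (hk.trans hlt.le)]) c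
      simp only [hstep]
      rw [sum_antidiagonal_of_antisymm fun b c => ?_]
      · simp
      · simpa only [Nat.cast_succ] using hA.add_single_antisymm hlt.ne hsucc b c

end Alternating

section RowSeries

variable {n : ℕ}

/-- The generating series `∑_{N ≥ 0} K_{(N,0,…,0), μ} z^N` of the row shapes. -/
def rowSeries (t : ClassicalType) (μ : Fin (n + 1) → ℚ) : ℤ⟦X⟧⟦X⟧ :=
  PowerSeries.mk fun N => altKostant t μ (t.rho (n + 1) + Pi.single (Fin.last n) (N : ℚ))

/-- The generating series of the iterated shifts of `K_{0, μ}` by all the weights `±e_i` of the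
vector representation. -/
def pieriSeries (t : ClassicalType) (μ : Fin n → ℚ) : ℤ⟦X⟧⟦X⟧ :=
  shiftSeries univ signedUnit (altKostant t μ) (t.rho n)

lemma altKostant_D_one_eq_zero {μ v : Fin 1 → ℚ} (hv : v 0 < μ 0) : altKostant .D μ v = 0 := by
  refine sum_eq_zero fun w _ => ?_
  cases hw : w.2 0 with
  | true => simp [weylDet, signProd, hw]
  | false =>
    rw [kostantQ_eq_zero (LinearMap.proj 0) (by simp [ClassicalType.roots, rootsD]), smul_zero]
    simpa [wAct, hw, ClassicalType.rho, ClassicalType.shift, Subsingleton.elim (w.1.symm 0) 0]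

lemma rowSeries_eq_tau_mul_pieriSeries (t : ClassicalType) {μ : Fin (n + 1) → ℚ}
    (hμ : ∀ i, 0 ≤ μ i) : rowSeries t μ = t.tau * pieriSeries t μ := by
  have hpieri : pieriSeries t μ = pieriUpTo (Fin.last n) (altKostant t μ) (t.rho (n + 1)) := by
    rw [pieriSeries, pieriUpTo, ← Fin.top_eq_last, Iic_top, univ_product_univ]
  ext1 N
  rw [rowSeries, coeff_mk, hpieri]
  by_cases ht : t = .D ∧ n = 0
  · obtain ⟨rfl, rfl⟩ := ht
    refine .trans ?_ (coeff_one_sub_sq_mul_pieriUpTo_zero _ _ N).symm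
    refine left_eq_add.mpr (ite_eq_left_iff.mpr fun hN => altKostant_D_one_eq_zero ?_)
    refine lt_of_lt_of_le ?_ (hμ 0)
    simpa [ClassicalType.rho, ClassicalType.shift] using Nat.pos_of_ne_zero hN
  · refine (coeff_tau_mul_pieriUpTo (isAlternating_altKostant t μ) _ ?_ (fun _ _ => rfl) N).symm
    rintro rfl h
    exact ht ⟨rfl, by simpa [Fin.ext_iff] using h⟩

end RowSeries

section ExtendPerm

variable {m : ℕ}

/-- The extension of a permutation of the first `m` coordinates by the identity on the last one. -/
def extendPerm (σ : Equiv.Perm (Fin m)) : Equiv.Perm (Fin (m + 1)) :=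
  finSuccEquivLast.symm.permCongr σ.optionCongr

/-- The extension of a sign vector by a last sign `+`. -/
def extendSigns (ε : Fin m → Bool) : Fin (m + 1) → Bool := Fin.snoc (α := fun _ => Bool) ε false

@[simp]
lemma extendPerm_castSucc (σ : Equiv.Perm (Fin m)) (i : Fin m) :
    extendPerm σ i.castSucc = (σ i).castSucc := by
  simp [extendPerm]

@[simp]
lemma extendPerm_last (σ : Equiv.Perm (Fin m)) : extendPerm σ (Fin.last m) = Fin.last m := by
  simp [extendPerm]

lemma inv_extendPerm (σ : Equiv.Perm (Fin m)) : (extendPerm σ)⁻¹ = extendPerm σ⁻¹ := by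
  refine inv_eq_of_mul_eq_one_right (Equiv.ext fun i => ?_)
  cases i using Fin.lastCases <;> simp

lemma extendPerm_injective : Function.Injective (extendPerm (m := m)) := fun σ τ h =>
  Equiv.ext fun i => by simpa using DFunLike.congr_fun h i.castSucc

lemma extendSigns_injective : Function.Injective (extendSigns (m := m)) := fun _ _ h =>
  (Fin.snoc_inj.mp h).1

lemma exists_extendPerm {σ : Equiv.Perm (Fin (m + 1))} (hσ : σ (Fin.last m) = Fin.last m) :
    ∃ τ, extendPerm τ = σ := by
  refine ⟨(finSuccEquivLast.permCongr σ).removeNone, ?_⟩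
  have hnone : finSuccEquivLast.permCongr σ none = none := by simp [hσ]
  rw [extendPerm, map_equiv_removeNone, hnone, Equiv.swap_self]
  ext i
  simp

lemma exists_extendSigns {ε : Fin (m + 1) → Bool} (hε : ε (Fin.last m) = false) :
    ∃ δ, extendSigns δ = ε :=
  ⟨Fin.init ε, by rw [extendSigns, ← hε]; exact Fin.snoc_init_self ε⟩

lemma weylDet_extend (t : ClassicalType) (σ : Equiv.Perm (Fin m)) (ε : Fin m → Bool) :
    weylDet t (extendPerm σ) (extendSigns ε) = weylDet t σ ε := by
  have hsign : signProd (extendSigns ε) = signProd ε := by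
    simp [signProd, extendSigns, Fin.prod_univ_castSucc]
  have hdet : wDet (extendPerm σ) (extendSigns ε) = wDet σ ε := by
    rw [wDet, wDet, ← signProd, ← signProd, hsign]
    simp [extendPerm, Equiv.Perm.sign_permCongr, Equiv.optionCongr_sign]
  cases t <;> simp only [weylDet, hsign, hdet]

lemma wAct_extend (σ : Equiv.Perm (Fin m)) (ε : Fin m → Bool) (β : Fin m → ℚ) (x : ℚ) :
    wAct (extendPerm σ) (extendSigns ε) (appendLast β x) = appendLast (wAct σ ε β) x := by
  refine eq_appendLast (fun i => ?_) ?_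
  · rw [wAct, inv_extendPerm, extendPerm_castSucc, appendLast_castSucc]
    simp [wAct, extendSigns]
  · rw [wAct, inv_extendPerm, extendPerm_last, appendLast_last]
    simp [extendSigns]

lemma rho_succ (t : ClassicalType) (m : ℕ) : t.rho (m + 1) = appendLast (t.rho m) (m + t.shift) :=
  eq_appendLast (by simp [ClassicalType.rho]) (by simp [ClassicalType.rho])

lemma roots_last_nonneg (t : ClassicalType) : ∀ α ∈ t.roots (m + 1), 0 ≤ α (Fin.last m) := by
  have hsingle (i : Fin (m + 1)) {x : ℚ} (hx : 0 ≤ x) :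
      0 ≤ (Pi.single i x : Fin (m + 1) → ℚ) (Fin.last m) := by
    rw [Pi.single_apply]
    split_ifs <;> simp [hx]
  have hD : ∀ α ∈ rootsD (m + 1), 0 ≤ α (Fin.last m) := by
    intro α hα
    obtain ⟨i, j, hij, b, rfl⟩ := mem_rootsD.mp hα
    have hj : Fin.last m ≠ j := (hij.trans_le (Fin.le_last i)).ne'
    simpa [signedUnit, hj] using hsingle i zero_le_one
  cases t with
  | B | C =>
    simp only [ClassicalType.roots, rootsB, rootsC, mem_union, mem_image]
    rintro α (hα | ⟨i, -, rfl⟩)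
    · exact hD α hα
    · exact hsingle i (by norm_num)
  | D => exact hD

lemma last_neg_or_signProd_neg (t : ClassicalType) (μ : Fin m → ℚ) (b N : ℕ)
    {σ : Equiv.Perm (Fin (m + 1))} {ε : Fin (m + 1) → Bool}
    (hw : ¬(σ (Fin.last m) = Fin.last m ∧ ε (Fin.last m) = false)) :
    (wAct σ ε (appendLast (t.rho m) (m + t.shift + N)) -
        (appendLast μ b + t.rho (m + 1))) (Fin.last m) < 0 ∨ t = .D ∧ signProd ε = -1 := by
  have hshift := t.shift_nonneg
  have hN := N.cast_nonneg (α := ℚ)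
  have hb := b.cast_nonneg (α := ℚ)
  rw [Pi.sub_apply, Pi.add_apply, appendLast_last, rho_succ, appendLast_last, wAct]
  cases hk : σ⁻¹ (Fin.last m) using Fin.lastCases with
  | cast k =>
    left
    have hlt : (k : ℚ) < m := by exact_mod_cast k.is_lt
    rw [appendLast_castSucc, ClassicalType.rho]
    split_ifs <;> linarith [hshift, hN, hb]
  | last =>
    have hε : ε (Fin.last m) = true := by
      rw [Equiv.Perm.inv_eq_iff_eq] at hk
      simpa [← hk] using hw
    by_cases hrank : t = .D ∧ m = 0
    · obtain ⟨rfl, rfl⟩ := hrank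
      exact .inr ⟨rfl, by simpa [signProd] using hε⟩
    · have hpos : 0 < m + t.shift := by
        cases t with
        | B | C => simp only [ClassicalType.shift]; positivity
        | D => simpa [ClassicalType.shift, Nat.pos_iff_ne_zero] using hrank
      left
      rw [hε, appendLast_last, if_pos rfl]
      linarith [hpos, hN, hb]

lemma altKostant_appendLast (t : ClassicalType) (μ : Fin m → ℚ) (b N : ℕ) :
    altKostant t (appendLast μ b) (t.rho (m + 1) + Pi.single (Fin.last m) (N : ℚ)) =
      ∑ w : Equiv.Perm (Fin m) × (Fin m → Bool), weylDet t w.1 w.2 •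
        kostantQ (t.roots (m + 1))
          (appendLast (wAct w.1 w.2 (t.rho m) - (μ + t.rho m)) (N - b)) := by
  have hadd : t.rho (m + 1) + Pi.single (Fin.last m) (N : ℚ) =
      appendLast (t.rho m) (m + t.shift + N) := by
    rw [rho_succ]
    exact eq_appendLast (by simp) (by simp)
  rw [hadd, altKostant]
  symm
  refine sum_of_injOn (fun w => (extendPerm w.1, extendSigns w.2)) ?_ (by simp) ?_ ?_
  · rintro ⟨σ, ε⟩ - ⟨τ, δ⟩ - h
    obtain ⟨hσ, hε⟩ := Prod.ext_iff.mp h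
    exact Prod.ext (extendPerm_injective hσ) (extendSigns_injective hε)
  · rintro ⟨σ, ε⟩ - hw
    have hmoved : ¬(σ (Fin.last m) = Fin.last m ∧ ε (Fin.last m) = false) := by
      rintro ⟨hσ, hε⟩
      obtain ⟨τ, rfl⟩ := exists_extendPerm hσ
      obtain ⟨δ, rfl⟩ := exists_extendSigns hε
      exact hw ⟨(τ, δ), mem_coe.mpr (mem_univ _), rfl⟩
    obtain hneg | ⟨rfl, hsign⟩ := last_neg_or_signProd_neg t μ b N hmoved
    · exact smul_eq_zero_of_right _
        (kostantQ_eq_zero (LinearMap.proj (Fin.last m)) (roots_last_nonneg t) hneg)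
    · simp [weylDet, hsign]
  · rintro ⟨σ, ε⟩ -
    simp only
    have hweight : wAct (extendPerm σ) (extendSigns ε) (appendLast (t.rho m) (m + t.shift + N)) -
        (appendLast μ b + t.rho (m + 1)) =
          appendLast (wAct σ ε (t.rho m) - (μ + t.rho m)) (N - b) := by
      rw [wAct_extend, rho_succ]
      exact eq_appendLast (by simp) (by simp; ring)
    rw [weylDet_extend, hweight]

end ExtendPerm

section RankInduction

variable {m : ℕ}

lemma rowSeries_appendLast (t : ClassicalType) (μ : Fin m → ℚ) (b : ℕ) :
    rowSeries t (appendLast μ b) = X ^ b * ∑ w : Equiv.Perm (Fin m) × (Fin m → Bool),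
      weylDet t w.1 w.2 •
        lastSeries (t.roots (m + 1)) (wAct w.1 w.2 (t.rho m) - (μ + t.rho m)) := by
  ext1 N
  rw [rowSeries, coeff_mk, altKostant_appendLast, coeff_X_pow_mul']
  split_ifs with hN
  · simp only [map_sum, map_zsmul, lastSeries, coeff_mk, Nat.cast_sub hN]
  · have hneg : (N : ℚ) - b < 0 := sub_neg_of_lt (by exact_mod_cast not_le.mp hN)
    simp only [kostantQ_appendLast_of_neg (roots_last_nonneg t) _ hneg, smul_zero, sum_const_zero]

lemma pieriSeries_eq_sum (t : ClassicalType) (μ : Fin m → ℚ) :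
    pieriSeries t μ = ∑ w : Equiv.Perm (Fin m) × (Fin m → Bool), weylDet t w.1 w.2 •
      shiftSeries univ signedUnit (kostantQ (t.roots m))
        (wAct w.1 w.2 (t.rho m) - (μ + t.rho m)) := by
  have h := shiftSeries_sum_zsmul univ
    (fun w : Equiv.Perm (Fin m) × (Fin m → Bool) => weylDet t w.1 w.2)
    (fun w v => kostantQ (t.roots m) (wAct w.1 w.2 v - (μ + t.rho m))) univ signedUnit (t.rho m)
  simp only [shiftSeries_signedUnit_wAct, map_univ_equiv] at h
  exact h

lemma lastFactor_mul_rowSeries (t : ClassicalType) (μ : Fin m → ℚ) (b : ℕ) :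
    t.lastFactor * rowSeries t (appendLast μ b) = X ^ b * rescale X (pieriSeries t μ) := by
  rw [rowSeries_appendLast, pieriSeries_eq_sum, mul_left_comm, mul_sum, map_sum]
  simp only [mul_smul_comm, lastFactor_mul_lastSeries, map_zsmul]

/-- The statistic `h_m(μ) = ∑ (m - i) μ_i` (with `1`-based indices `i`). -/
def rowHeight (μ : Fin m → ℕ) : ℕ := ∑ i : Fin m, (m - 1 - (i : ℕ)) * μ i

lemma rowHeight_succ (μ : Fin (m + 1) → ℕ) :
    rowHeight μ = rowHeight (fun i : Fin m => μ i.castSucc) + ∑ i : Fin m, μ i.castSucc := by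
  rw [rowHeight, rowHeight, ← sum_add_distrib, Fin.sum_univ_castSucc]
  simp only [Fin.val_castSucc, Fin.val_last, Nat.add_sub_cancel, Nat.sub_self, zero_mul, add_zero]
  refine sum_congr rfl fun i _ => ?_
  rw [← Nat.succ_mul]
  congr 1
  have := i.is_lt
  omega

lemma rowSeries_shift_of_pieriSeries_shift {t : ClassicalType} {μ : Fin (m + 1) → ℕ}
    (h : pieriSeries t (fun i : Fin m => (μ i.castSucc : ℚ)) =
      X ^ (∑ i : Fin m, μ i.castSucc) * C (X ^ rowHeight fun i : Fin m => μ i.castSucc) *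
        pieriSeries t (0 : Fin m → ℚ)) :
    rowSeries t (fun i => (μ i : ℚ)) =
      X ^ (∑ i, μ i) * C (X ^ rowHeight μ) * rowSeries t (0 : Fin (m + 1) → ℚ) := by
  have hμ : (fun i => (μ i : ℚ)) =
      appendLast (fun i : Fin m => (μ i.castSucc : ℚ)) (μ (Fin.last m)) :=
    eq_appendLast (fun _ => rfl) rfl
  have hzero : (0 : Fin (m + 1) → ℚ) = appendLast 0 (0 : ℕ) := eq_appendLast (by simp) (by simp)
  have hC : rescale X (C X : ℤ⟦X⟧⟦X⟧) = C X := by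
    ext1 N
    rcases eq_or_ne N 0 with rfl | hN <;> simp [coeff_rescale, coeff_C, *]
  apply mul_left_cancel₀ t.lastFactor_ne_zero
  rw [mul_left_comm, hμ, hzero, lastFactor_mul_rowSeries, lastFactor_mul_rowSeries, h,
    rowHeight_succ, Fin.sum_univ_castSucc]
  simp only [map_mul, map_pow, rescale_X, hC, pow_add, mul_pow]
  ring

lemma ClassicalType.tau_ne_zero {R : Type*} [CommRing R] [Nontrivial R] (t : ClassicalType) :
    (t.tau : R⟦X⟧) ≠ 0 := by
  intro h
  have := congrArg constantCoeff h
  cases t <;> simp [tau] at this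

lemma pieriSeries_shift (t : ClassicalType) (μ : Fin m → ℕ) :
    pieriSeries t (fun i => (μ i : ℚ)) =
      X ^ (∑ i, μ i) * C (X ^ rowHeight μ) * pieriSeries t (0 : Fin m → ℚ) := by
  induction m with
  | zero =>
    rw [Subsingleton.elim (fun i => (μ i : ℚ)) 0]
    simp [rowHeight]
  | succ m ih =>
    have hrow := rowSeries_shift_of_pieriSeries_shift (μ := μ) (ih fun i => μ i.castSucc)
    apply mul_left_cancel₀ t.tau_ne_zero
    rw [← rowSeries_eq_tau_mul_pieriSeries t fun i => Nat.cast_nonneg (μ i), hrow,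
      rowSeries_eq_tau_mul_pieriSeries t (μ := 0) fun _ => le_rfl]
    exact mul_left_comm _ _ _

lemma rowSeries_shift (t : ClassicalType) (μ : Fin (m + 1) → ℕ) :
    rowSeries t (fun i => (μ i : ℚ)) =
      X ^ (∑ i, μ i) * C (X ^ rowHeight μ) * rowSeries t (0 : Fin (m + 1) → ℚ) :=
  rowSeries_shift_of_pieriSeries_shift (pieriSeries_shift t fun i => μ i.castSucc)

lemma altKostant_row_shift (t : ClassicalType) (μ : Fin (m + 1) → ℕ) (l : ℕ) :
    altKostant t (fun i => (μ i : ℚ))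
        (t.rho (m + 1) + Pi.single (Fin.last m) ((l + ∑ i, μ i : ℕ) : ℚ)) =
      X ^ rowHeight μ * altKostant t 0 (t.rho (m + 1) + Pi.single (Fin.last m) (l : ℚ)) := by
  have h := congrArg (coeff (l + ∑ i, μ i)) (rowSeries_shift t μ)
  rwa [mul_assoc, coeff_X_pow_mul, coeff_C_mul, rowSeries, rowSeries, coeff_mk, coeff_mk] at h

end RankInduction

section KostkaFoulkes

/-- The Kostka–Foulkes polynomial `K_{λ, μ}` of type `t`, as a power series in `q`. -/
def ClassicalType.kostka (t : ClassicalType) {n : ℕ} (lam mu : Fin n → ℚ) : ℤ⟦X⟧ :=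
  altKostant t mu (lam + t.rho n)

variable {n : ℕ}

lemma KB_eq_kostka (lam mu : Fin n → ℚ) : KB n lam mu = ClassicalType.B.kostka lam mu := by
  simp only [ClassicalType.kostka, altKostant, Fintype.sum_prod_type]
  rfl

lemma KC_eq_kostka (lam mu : Fin n → ℚ) : KC n lam mu = ClassicalType.C.kostka lam mu := by
  simp only [ClassicalType.kostka, altKostant, Fintype.sum_prod_type]
  rfl

lemma KD_eq_kostka (lam mu : Fin n → ℚ) : KD n lam mu = ClassicalType.D.kostka lam mu := by
  have hrho : ClassicalType.D.rho n = rhoD n := by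
    ext; simp [ClassicalType.rho, ClassicalType.shift, rhoD]
  simp only [ClassicalType.kostka, altKostant, hrho, Fintype.sum_prod_type, weylDet, ite_smul,
    zero_smul]
  rfl

lemma ClassicalType.kostka_row_shift (t : ClassicalType) {μ : Fin n → ℤ} (hμ0 : ∀ i, 0 ≤ μ i)
    {r : ℕ} (hr : ∑ i, μ i ≤ (r : ℤ)) :
    t.kostka (fun i => if (i : ℕ) = n - 1 then (r : ℚ) else 0) (fun i => (μ i : ℚ)) =
      X ^ (∑ i : Fin n, (n - 1 - (i : ℕ)) * (μ i).toNat) *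
        t.kostka (fun i : Fin n => if (i : ℕ) = n - 1 then (((r : ℤ) - ∑ i, μ i).toNat : ℚ) else 0)
          0 := by
  lift μ to Fin n → ℕ using hμ0
  simp only [Int.cast_natCast, Int.toNat_natCast] at hr ⊢
  cases n with
  | zero =>
    rw [Fin.sum_univ_zero, pow_zero, one_mul]
    congr 1
    exact Subsingleton.elim _ _
  | succ m =>
    have hrow (x : ℚ) : (fun i : Fin (m + 1) => if (i : ℕ) = m + 1 - 1 then x else 0) =
        Pi.single (Fin.last m) x := by
      ext i
      simp [Pi.single_apply, Fin.ext_iff]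
    obtain ⟨l, rfl⟩ : ∃ l, r = l + ∑ i, μ i := Nat.exists_eq_add_of_le' (by exact_mod_cast hr)
    have hl : (((l + ∑ i, μ i : ℕ) : ℤ) - ∑ i, (μ i : ℤ)).toNat = l := by push_cast; simp
    rw [hl, hrow, hrow, kostka, kostka, add_comm (Pi.single _ _), add_comm (Pi.single _ _)]
    exact altKostant_row_shift t μ l

end KostkaFoulkes

end RowShape

end

theorem K_row_shape_general (n : ℕ) (μ : Fin n → ℤ) (hμ0 : ∀ i, 0 ≤ μ i)
    (r : ℕ) (hr : (∑ i, μ i) ≤ (r : ℤ)) :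
    (KB n (fun i => if (i : ℕ) = n - 1 then (r : ℚ) else 0) (fun i => (μ i : ℚ)) =
      (PowerSeries.X : PowerSeries ℤ) ^ (∑ i : Fin n, (n - 1 - (i : ℕ)) * (μ i).toNat) *
        KB n (fun i => if (i : ℕ) = n - 1 then (((r : ℤ) - ∑ i, μ i).toNat : ℚ) else 0) 0) ∧
    (KC n (fun i => if (i : ℕ) = n - 1 then (r : ℚ) else 0) (fun i => (μ i : ℚ)) =
      (PowerSeries.X : PowerSeries ℤ) ^ (∑ i : Fin n, (n - 1 - (i : ℕ)) * (μ i).toNat) *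
        KC n (fun i => if (i : ℕ) = n - 1 then (((r : ℤ) - ∑ i, μ i).toNat : ℚ) else 0) 0) ∧
    (KD n (fun i => if (i : ℕ) = n - 1 then (r : ℚ) else 0) (fun i => (μ i : ℚ)) =
      (PowerSeries.X : PowerSeries ℤ) ^ (∑ i : Fin n, (n - 1 - (i : ℕ)) * (μ i).toNat) *
        KD n (fun i => if (i : ℕ) = n - 1 then (((r : ℤ) - ∑ i, μ i).toNat : ℚ) else 0) 0) := by
  simp only [RowShape.KB_eq_kostka, RowShape.KC_eq_kostka, RowShape.KD_eq_kostka]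
  exact ⟨RowShape.ClassicalType.B.kostka_row_shift hμ0 hr,
    RowShape.ClassicalType.C.kostka_row_shift hμ0 hr,
    RowShape.ClassicalType.D.kostka_row_shift hμ0 hr⟩

/-- For a row shape: `K^{X_n}_{(r,0,…,0),μ}(q) = q^{h_n(μ)} K^{X_n}_{(l,0,…,0),0}(q)`
with `l = r - |μ|` and `h_n(μ) = ∑ (n-i) μ_i`, for `X = B, C` (any `n ≥ 1`) and `X = D` (`n ≥ 3`). -/
theorem K_row_shape (n : ℕ) (hn : 1 ≤ n) (μ : Fin n → ℤ)
    (hμ : Monotone μ) (hμ0 : ∀ i, 0 ≤ μ i) (r : ℕ) (hr : (∑ i, μ i) ≤ (r : ℤ)) :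
    (KB n (fun i => if (i : ℕ) = n - 1 then (r : ℚ) else 0) (fun i => (μ i : ℚ)) =
      (PowerSeries.X : PowerSeries ℤ) ^ (∑ i : Fin n, (n - 1 - (i : ℕ)) * (μ i).toNat) *
        KB n (fun i => if (i : ℕ) = n - 1 then (((r : ℤ) - ∑ i, μ i).toNat : ℚ) else 0) 0) ∧
    (KC n (fun i => if (i : ℕ) = n - 1 then (r : ℚ) else 0) (fun i => (μ i : ℚ)) =
      (PowerSeries.X : PowerSeries ℤ) ^ (∑ i : Fin n, (n - 1 - (i : ℕ)) * (μ i).toNat) *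
        KC n (fun i => if (i : ℕ) = n - 1 then (((r : ℤ) - ∑ i, μ i).toNat : ℚ) else 0) 0) ∧
    (3 ≤ n →
      KD n (fun i => if (i : ℕ) = n - 1 then (r : ℚ) else 0) (fun i => (μ i : ℚ)) =
        (PowerSeries.X : PowerSeries ℤ) ^ (∑ i : Fin n, (n - 1 - (i : ℕ)) * (μ i).toNat) *
          KD n (fun i => if (i : ℕ) = n - 1 then (((r : ℤ) - ∑ i, μ i).toNat : ℚ) else 0) 0) := by
  obtain ⟨hB, hC, hD⟩ := K_row_shape_general n μ hμ0 r hr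
  exact ⟨hB, hC, fun _ => hD⟩
end
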